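/- arXiv:1302.1149 — 2 statements merged into one kernel-verified Lean document; each statement's English description precedes it below -/
import Mathlib

section
/- Let (A, d, Δ) be a differential Batalin–Vilkovisky algebra of odd degree k over a field K of characteristic 0 which has the degeneration property. Then the associated DGLA g = A[k], with differential −d and bracket [a,b] = (−1)^{deg a}(Δ(ab) − Δ(a)b) − aΔ(b), is homotopy abelian. -/
/-!
Basic homotopical algebra of differential graded Lie algebras over a field of
characteristic zero, following [Iacono, "Deformations and obstructions of pairs (X,D)"].

A differential graded Lie algebra (DGLA) is encoded as a `K`-module together with an
internal `ℤ`-grading (a family of submodules whose direct sum is the whole module),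
a differential of degree `+1` squaring to zero, and a bracket which is graded
skew-symmetric, satisfies the graded Jacobi identity and the graded Leibniz rule.
-/

universe u v w

/-- A `ℤ`-graded cochain complex structure on a `K`-module `V`: an internal grading
together with a differential of degree `+1` squaring to zero. -/
structure CochainStruct (K : Type u) [Field K] (V : Type v) [AddCommGroup V] [Module K V] :
    Type (max u v) where
  grading : ℤ → Submodule K V
  isInternal : DirectSum.IsInternal grading
  d : V →ₗ[K] V
  d_degree : ∀ i : ℤ, ∀ x ∈ grading i, d x ∈ grading (i + 1)
  d_sq : ∀ x : V, d (d x) = 0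

namespace CochainStruct

variable {K : Type u} [Field K] {V : Type v} [AddCommGroup V] [Module K V]
  {W : Type w} [AddCommGroup W] [Module K W]

/-- Degree `i` cocycles. -/
def cocycles (c : CochainStruct K V) (i : ℤ) : Submodule K V :=
  c.grading i ⊓ LinearMap.ker c.d

/-- Degree `i` coboundaries, as a submodule of the degree `i` cocycles. -/
def coboundaries (c : CochainStruct K V) (i : ℤ) : Submodule K (c.cocycles i) :=
  Submodule.comap (c.cocycles i).subtype (c.grading i ⊓ LinearMap.range c.d)

/-- The degree `i` cohomology of a graded cochain complex. -/
def cohomology (c : CochainStruct K V) (i : ℤ) : Type v :=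
  c.cocycles i ⧸ c.coboundaries i

instance (c : CochainStruct K V) (i : ℤ) : AddCommGroup (c.cohomology i) :=
  inferInstanceAs (AddCommGroup (c.cocycles i ⧸ c.coboundaries i))

instance (c : CochainStruct K V) (i : ℤ) : Module K (c.cohomology i) :=
  inferInstanceAs (Module K (c.cocycles i ⧸ c.coboundaries i))

end CochainStruct

/-- A (degree zero) morphism of graded cochain complexes. -/
structure CochainMap {K : Type u} [Field K] {V : Type v} {W : Type w}
    [AddCommGroup V] [Module K V] [AddCommGroup W] [Module K W]
    (c : CochainStruct K V) (c' : CochainStruct K W) : Type (max u v w) where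
  toFun : V →ₗ[K] W
  map_grading : ∀ i : ℤ, ∀ x ∈ c.grading i, toFun x ∈ c'.grading i
  map_d : ∀ x : V, toFun (c.d x) = c'.d (toFun x)

namespace CochainMap

variable {K : Type u} [Field K] {V : Type v} {W : Type w}
  [AddCommGroup V] [Module K V] [AddCommGroup W] [Module K W]
  {c : CochainStruct K V} {c' : CochainStruct K W}

/-- The induced map on cocycles. -/
def cocyclesMap (f : CochainMap c c') (i : ℤ) : c.cocycles i →ₗ[K] c'.cocycles i :=
  f.toFun.restrict (p := c.cocycles i) (q := c'.cocycles i) fun x hx => by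
    rcases Submodule.mem_inf.mp hx with ⟨h1, h2⟩
    refine Submodule.mem_inf.mpr ⟨f.map_grading i x h1, ?_⟩
    simp only [LinearMap.mem_ker] at h2 ⊢
    rw [← f.map_d, h2, map_zero]

/-- The induced map in cohomology. -/
def cohMap (f : CochainMap c c') (i : ℤ) :
    c.cohomology i →ₗ[K] c'.cohomology i :=
  Submodule.mapQ (c.coboundaries i) (c'.coboundaries i) (f.cocyclesMap i) (by
    rintro ⟨x, hx⟩ hmem
    simp only [CochainStruct.coboundaries, Submodule.mem_comap] at hmem ⊢
    rcases Submodule.mem_inf.mp hmem with ⟨h1, h2⟩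
    refine Submodule.mem_inf.mpr ⟨?_, ?_⟩
    · exact f.map_grading i x h1
    · rcases h2 with ⟨y, hy⟩
      exact ⟨f.toFun y, by
        have := f.map_d y
        simp only [Submodule.coe_subtype] at hy ⊢
        rw [← this, hy]
        rfl⟩)

end CochainMap

/-- A differential graded Lie algebra structure on a `K`-module `L`:
a graded cochain complex together with a degree zero graded bracket which is
graded skew-symmetric and satisfies the graded Jacobi identity and the graded
Leibniz rule. -/
structure DGLAStruct (K : Type u) [Field K] (L : Type v) [AddCommGroup L] [Module K L]
    extends CochainStruct K L where
  bracket : L →ₗ[K] L →ₗ[K] L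
  bracket_degree : ∀ i j : ℤ, ∀ x ∈ grading i, ∀ y ∈ grading j, bracket x y ∈ grading (i + j)
  bracket_skew : ∀ i j : ℤ, ∀ x ∈ grading i, ∀ y ∈ grading j,
    bracket x y = -(((-1 : K) ^ (i * j)) • bracket y x)
  bracket_jacobi : ∀ i j : ℤ, ∀ x ∈ grading i, ∀ y ∈ grading j, ∀ z : L,
    bracket x (bracket y z) =
      bracket (bracket x y) z + ((-1 : K) ^ (i * j)) • bracket y (bracket x z)
  bracket_leibniz : ∀ i : ℤ, ∀ x ∈ grading i, ∀ y : L,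
    d (bracket x y) = bracket (d x) y + ((-1 : K) ^ i) • bracket x (d y)

/-- A morphism of differential graded Lie algebras. -/
structure DGLAStructHom {K : Type u} [Field K] {L : Type v} {M : Type w}
    [AddCommGroup L] [Module K L] [AddCommGroup M] [Module K M]
    (g : DGLAStruct K L) (h : DGLAStruct K M) : Type (max u v w) where
  toFun : L →ₗ[K] M
  map_grading : ∀ i : ℤ, ∀ x ∈ g.grading i, toFun x ∈ h.grading i
  map_d : ∀ x : L, toFun (g.d x) = h.d (toFun x)
  map_bracket : ∀ x y : L, toFun (g.bracket x y) = h.bracket (toFun x) (toFun y)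

namespace DGLAStructHom

variable {K : Type u} [Field K] {L : Type v} {M : Type w}
  [AddCommGroup L] [Module K L] [AddCommGroup M] [Module K M]
  {g : DGLAStruct K L} {h : DGLAStruct K M}

/-- The underlying morphism of complexes of a morphism of DGLAs. -/
def toCochainMap (f : DGLAStructHom g h) :
    CochainMap g.toCochainStruct h.toCochainStruct :=
  ⟨f.toFun, f.map_grading, f.map_d⟩

/-- A quasi-isomorphism of DGLAs is a morphism inducing bijections in cohomology. -/
def IsQuasiIso (f : DGLAStructHom g h) : Prop :=
  ∀ i : ℤ, Function.Bijective (f.toCochainMap.cohMap i)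

end DGLAStructHom

/-- A bundled differential graded Lie algebra over `K`. -/
structure DGLA (K : Type u) [Field K] : Type (max u (v + 1)) where
  carrier : Type v
  [acg : AddCommGroup carrier]
  [mod : Module K carrier]
  str : DGLAStruct K carrier

attribute [instance] DGLA.acg DGLA.mod

namespace DGLA

variable {K : Type u} [Field K]

/-- Two DGLAs are related if there is a quasi-isomorphism from the first to the second. -/
def qisRel : DGLA.{u, v} K → DGLA.{u, v} K → Prop := fun X Y =>
  ∃ f : DGLAStructHom X.str Y.str, f.IsQuasiIso

/-- Homotopy equivalence of DGLAs: the equivalence relation generated by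
quasi-isomorphisms. -/
def HomotopyEquiv (X Y : DGLA.{u, v} K) : Prop :=
  Relation.EqvGen qisRel X Y

/-- A DGLA is abelian if its bracket is trivial. -/
def IsAbelian (X : DGLA.{u, v} K) : Prop :=
  ∀ x y : X.carrier, X.str.bracket x y = 0

/-- A DGLA is homotopy abelian if it is homotopy equivalent (i.e. quasi-isomorphic,
under the equivalence relation generated by quasi-isomorphisms) to an abelian DGLA. -/
def HomotopyAbelian (X : DGLA.{u, v} K) : Prop :=
  ∃ Y : DGLA.{u, v} K, Y.IsAbelian ∧ X.HomotopyEquiv Y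

end DGLA

/-- A zig-zag of morphisms of DGLAs (the backwards arrows being quasi-isomorphisms):
a morphism in the homotopy category of DGLAs, i.e. an `L∞` morphism of DGLAs. -/
inductive ZigZag {K : Type u} [Field K] : DGLA.{u, v} K → DGLA.{u, v} K → Type (max u (v + 1))
  | refl (X : DGLA.{u, v} K) : ZigZag X X
  | fwd {X Y Z : DGLA.{u, v} K} (f : DGLAStructHom X.str Y.str) (t : ZigZag Y Z) : ZigZag X Z
  | bwd {X Y Z : DGLA.{u, v} K} (f : DGLAStructHom Y.str X.str) (hf : f.IsQuasiIso)
      (t : ZigZag Y Z) : ZigZag X Z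

/-- The map induced in cohomology by a zig-zag of morphisms of DGLAs. -/
noncomputable def ZigZag.cohMap {K : Type u} [Field K] :
    ∀ {X Y : DGLA.{u, v} K}, ZigZag X Y → ∀ i : ℤ,
      X.str.toCochainStruct.cohomology i →ₗ[K] Y.str.toCochainStruct.cohomology i
  | _, _, .refl _, _ => LinearMap.id
  | _, _, .fwd f t, i => (t.cohMap i).comp (f.toCochainMap.cohMap i)
  | _, _, .bwd f hf t, i =>
      (t.cohMap i).comp
        ((LinearEquiv.ofBijective (f.toCochainMap.cohMap i) (hf i)).symm.toLinearMap)

/-!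
Differential Batalin–Vilkovisky algebras of odd degree `k` over a field of
characteristic `0`, their degeneration property, and the complex of formal Laurent
series `A((t))` with the differential `d - tΔ`, where `t` is a central formal variable
of (even) degree `k + 1`.  An element of `A((t))` is encoded as a function `ℤ → A`
(its family of `t`-coefficients) with support bounded below.
-/

/-- A differential Batalin–Vilkovisky algebra of degree `k` over `K` on the
`ℤ`-graded (graded-commutative) `K`-algebra `A`: a differential `d` of degree `+1`
making `A` a differential graded commutative algebra, together with an operator `Δ`
of degree `-k` with `Δ² = 0`, `Δ(1) = 0`, satisfying the seven-term relation. -/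
structure DBV (K : Type u) [Field K] (k : ℤ) (A : Type v) [Ring A] [Algebra K A] :
    Type (max u v) where
  grading : ℤ → Submodule K A
  isInternal : DirectSum.IsInternal grading
  one_mem : (1 : A) ∈ grading 0
  mul_mem : ∀ i j : ℤ, ∀ a ∈ grading i, ∀ b ∈ grading j, a * b ∈ grading (i + j)
  mul_gcomm : ∀ i j : ℤ, ∀ a ∈ grading i, ∀ b ∈ grading j,
    a * b = ((-1 : K) ^ (i * j)) • (b * a)
  d : A →ₗ[K] A
  d_degree : ∀ i : ℤ, ∀ a ∈ grading i, d a ∈ grading (i + 1)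
  d_sq : ∀ a : A, d (d a) = 0
  d_leibniz : ∀ i : ℤ, ∀ a ∈ grading i, ∀ b : A,
    d (a * b) = d a * b + ((-1 : K) ^ i) • (a * d b)
  Δ : A →ₗ[K] A
  Δ_degree : ∀ i : ℤ, ∀ a ∈ grading i, Δ a ∈ grading (i - k)
  Δ_sq : ∀ a : A, Δ (Δ a) = 0
  Δ_one : Δ 1 = 0
  seven_term : ∀ i j l : ℤ, ∀ a ∈ grading i, ∀ b ∈ grading j, ∀ c ∈ grading l,
    Δ (a * b * c) + Δ a * b * c + ((-1 : K) ^ (i * j)) • (Δ b * a * c)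
        + ((-1 : K) ^ (l * (i + j))) • (Δ c * a * b)
      = Δ (a * b) * c + ((-1 : K) ^ (i * (j + l))) • (Δ (b * c) * a)
        + ((-1 : K) ^ (j * l)) • (Δ (a * c) * b)

namespace DBV

variable {K : Type u} [Field K] {k : ℤ} {A : Type v} [Ring A] [Algebra K A]

/-- The degeneration property of a dBV algebra: for every `a₀` with `d a₀ = 0` there
is a sequence `(a_i)_{i ≥ 0}` with `deg a_i = deg a_{i-1} - k - 1` and
`Δ a_i = d a_{i+1}` for all `i ≥ 0`. -/
def DegenerationProperty (B : DBV K k A) : Prop :=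
  ∀ (i : ℤ) (a₀ : A), a₀ ∈ B.grading i → B.d a₀ = 0 →
    ∃ a : ℕ → A, a 0 = a₀ ∧ (∀ n : ℕ, a n ∈ B.grading (i - n * (k + 1))) ∧
      ∀ n : ℕ, B.Δ (a n) = B.d (a (n + 1))

end DBV

section Laurent

variable (K : Type u) [Field K] (A : Type v) [Ring A] [Algebra K A]

/-- The space `A((t))` of formal Laurent series `Σ_p a_p t^p` with coefficients in `A`,
as the submodule of coefficient functions `ℤ → A` with support bounded below. -/
def laurentSupport : Submodule K (ℤ → A) where
  carrier := {f | ∃ N : ℤ, ∀ p : ℤ, p < N → f p = 0}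
  zero_mem' := ⟨0, fun _ _ => rfl⟩
  add_mem' := by
    rintro f g ⟨N, hN⟩ ⟨N', hN'⟩
    refine ⟨min N N', fun p hp => ?_⟩
    have h1 : f p = 0 := hN p (lt_of_lt_of_le hp (min_le_left _ _))
    have h2 : g p = 0 := hN' p (lt_of_lt_of_le hp (min_le_right _ _))
    show f p + g p = 0
    rw [h1, h2, add_zero]
  smul_mem' := by
    rintro c f ⟨N, hN⟩
    refine ⟨N, fun p hp => ?_⟩
    show c • f p = 0
    rw [hN p hp, smul_zero]

/-- `A((t))`, formal Laurent series with coefficients in `A`. -/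
abbrev Laurent : Type v := ↥(laurentSupport K A)

variable {K A}

/-- The differential `d - tΔ` on `A((t))`, acting on coefficients by
`(d - tΔ)(f)_p = d (f_p) - Δ (f_{p-1})`. -/
noncomputable def laurentD (B : DBV K k A) : Laurent K A →ₗ[K] Laurent K A :=
  LinearMap.restrict
    (LinearMap.pi fun p : ℤ =>
      B.d.comp (LinearMap.proj p) - B.Δ.comp (LinearMap.proj (p - 1)))
    (p := laurentSupport K A) (q := laurentSupport K A)
    (fun f hf => by
      rcases hf with ⟨N, hN⟩
      refine ⟨N, fun p hp => ?_⟩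
      have h1 : f p = 0 := hN p hp
      have h2 : f (p - 1) = 0 := hN _ (by omega)
      simp [LinearMap.pi_apply, h1, h2])

/-- The contraction operator `i_a : A((t)) → A((t))`, `i_a(b) = (1/t) a b`, acting on
coefficients by `(i_a f)_p = a * f_{p+1}`. -/
noncomputable def laurentContr (a : A) : Laurent K A →ₗ[K] Laurent K A :=
  LinearMap.restrict
    (LinearMap.pi fun p : ℤ => (LinearMap.mulLeft K a).comp (LinearMap.proj (p + 1)))
    (p := laurentSupport K A) (q := laurentSupport K A)
    (fun f hf => by
      rcases hf with ⟨N, hN⟩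
      refine ⟨N - 1, fun p hp => ?_⟩
      have h1 : f (p + 1) = 0 := hN _ (by omega)
      simp [LinearMap.pi_apply, h1])

/-- The filtration `F^p = t^p A[[t]]` of `A((t))`; in particular `F^0 = A[[t]]`
and `F^1 = t A[[t]]`. -/
def laurentF (p : ℤ) : Submodule K (Laurent K A) where
  carrier := {f | ∀ q : ℤ, q < p → (f : ℤ → A) q = 0}
  zero_mem' := fun _ _ => rfl
  add_mem' := by
    rintro f g hf hg q hq
    show (f : ℤ → A) q + (g : ℤ → A) q = 0
    rw [hf q hq, hg q hq, add_zero]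
  smul_mem' := by
    rintro c f hf q hq
    show c • (f : ℤ → A) q = 0
    rw [hf q hq, smul_zero]

end Laurent

/-! Give `t` degree `k + 1`, so that `Q = tΔ - d` has degree one and makes `R = A((t))` a BV
algebra. Poles multiply, so the derived bracket of `Q` preserves `L = t⁻¹ A[[t]]`, and the
coefficient of `t⁻¹` is a morphism of DGLAs from `L` to `A[k]`. Degeneration says that the cocycles
of `A[k]` lift to cocycles of `L`, and it implies that `L → R` is injective in cohomology. Since
homotopy abelianity passes to the target of a morphism surjective in cohomology, and to the source
of one injective in cohomology, it remains to replace `L → R` by a morphism to `R` with zero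
bracket.

The derived bracket is the failure of `Q` to be a derivation, so `[Q, β·] = (Qβ)· + [β, ·]` up to
signs. This says that the cone of `R` acts on the complex `R`, with `(α, β)` acting as `[α, ·] + β`.
Twist the differential of the resulting semidirect product by `1 ∈ R` and pass to polynomial paths.
A cocycle then consists of a path `α` in `R` and an `r₀` such that `r₀ - α` varies by coboundaries.
If `α` runs from `0` to a point of `L` and `r₀` ends at `0`, then `r₀(0)` is cohomologous to
`-α(1)`, while it vanishes on brackets because everything that acts vanishes at time `0`.

The operators `d` and `Δ` are not assumed to anticommute, but `dΔ + Δd` is a derivation of the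
product because `d` is one of the bracket; the argument is applied to its kernel, which contains the
cocycles of `d` by degeneration. -/

open DirectSum Polynomial TensorProduct

/-- A differential graded Lie algebra given by its homogeneous components: degree `i` is a subspace
`G i` of a common space `W`, and the differential and the bracket are families indexed by the
degrees of their arguments, subject to the axioms on homogeneous elements only. Signs depending on
the degree can thus be part of the operations, and the subspaces `G i` need not be independent. -/
structure GradedDGLA (K : Type*) [Field K] (W : Type*) [AddCommGroup W] [Module K W] where
  G : ℤ → Submodule K W
  d : ℤ → W →ₗ[K] W
  br : ℤ → ℤ → W →ₗ[K] W →ₗ[K] W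
  d_mem : ∀ i, ∀ x ∈ G i, d i x ∈ G (i + 1)
  d_sq : ∀ i, ∀ x ∈ G i, d (i + 1) (d i x) = 0
  br_mem : ∀ i j, ∀ x ∈ G i, ∀ y ∈ G j, br i j x y ∈ G (i + j)
  skew : ∀ i j, ∀ x ∈ G i, ∀ y ∈ G j, br i j x y = -((-1 : K) ^ (i * j) • br j i y x)
  jacobi : ∀ i j l, ∀ x ∈ G i, ∀ y ∈ G j, ∀ z ∈ G l,
    br i (j + l) x (br j l y z)
      = br (i + j) l (br i j x y) z + (-1 : K) ^ (i * j) • br j (i + l) y (br i l x z)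
  leibniz : ∀ i j, ∀ x ∈ G i, ∀ y ∈ G j,
    d (i + j) (br i j x y) = br (i + 1) j (d i x) y + (-1 : K) ^ i • br i (j + 1) x (d j y)

namespace GradedDGLA

variable {K : Type*} [Field K] {W : Type*} [AddCommGroup W] [Module K W] (P : GradedDGLA K W)

/-- The total space `⨁ i, P.G i` of the DGLA `P`. -/
abbrev Total : Type _ := ⨁ i, P.G i

/-- The inclusion of the degree `i` component. -/
abbrev of (i : ℤ) : P.G i →ₗ[K] P.Total := lof K ℤ (fun i => P.G i) i

variable {P} in
theorem of_congr {i j : ℤ} (hij : i = j) {x : P.G i} {y : P.G j} (hxy : (x : W) = y) :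
    P.of i x = P.of j y := by
  subst hij
  rw [Subtype.ext hxy]

/-- The differential of `P` on homogeneous elements of degree `i`. -/
def dHom (i : ℤ) : P.G i →ₗ[K] P.G (i + 1) := (P.d i).restrict (P.d_mem i)

/-- The bracket of `P` on homogeneous elements of degrees `i` and `j`. -/
def brHom (i j : ℤ) : P.G i →ₗ[K] P.G j →ₗ[K] P.G (i + j) :=
  LinearMap.mk₂ K (fun x y => ⟨P.br i j x y, P.br_mem i j x x.2 y y.2⟩)
    (fun _ _ _ => Subtype.ext (by simp)) (fun _ _ _ => Subtype.ext (by simp))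
    (fun _ _ _ => Subtype.ext (by simp)) (fun _ _ _ => Subtype.ext (by simp))

/-- The differential on the total space. -/
noncomputable def totalD : P.Total →ₗ[K] P.Total :=
  toModule K ℤ _ fun i => P.of (i + 1) ∘ₗ P.dHom i

/-- The bracket on the total space. -/
noncomputable def totalBr : P.Total →ₗ[K] P.Total →ₗ[K] P.Total :=
  toModule K ℤ _ fun i =>
    (toModule K ℤ _ fun j => ((P.brHom i j).compr₂ (P.of (i + j))).flip).flip

@[simp]
theorem totalD_of (i : ℤ) (x : P.G i) : P.totalD (P.of i x) = P.of (i + 1) (P.dHom i x) := by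
  simp [totalD]

@[simp]
theorem totalBr_of (i j : ℤ) (x : P.G i) (y : P.G j) :
    P.totalBr (P.of i x) (P.of j y) = P.of (i + j) (P.brHom i j x y) := by
  simp [totalBr]

theorem total_linearMap_ext {M : Type*} [AddCommGroup M] [Module K M] {f f' : P.Total →ₗ[K] M}
    (h : ∀ i (x : P.G i), f (P.of i x) = f' (P.of i x)) (x : P.Total) : f x = f' x :=
  LinearMap.congr_fun (DirectSum.linearMap_ext K fun i => LinearMap.ext (h i)) x

theorem totalD_totalD (x : P.Total) : P.totalD (P.totalD x) = 0 := by
  refine P.total_linearMap_ext (f := P.totalD ∘ₗ P.totalD) (f' := 0) (fun i x => ?_) x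
  have : P.dHom (i + 1) (P.dHom i x) = 0 := Subtype.ext (P.d_sq i x x.2)
  simp [this]

theorem totalBr_skew (i j : ℤ) (x : P.G i) (y : P.G j) :
    P.totalBr (P.of i x) (P.of j y)
      = -((-1 : K) ^ (i * j) • P.totalBr (P.of j y) (P.of i x)) := by
  rw [totalBr_of, totalBr_of, ← map_smul, ← map_neg]
  exact of_congr (add_comm i j) (P.skew i j x x.2 y y.2)

theorem totalBr_jacobi (i j : ℤ) (x : P.G i) (y : P.G j) (z : P.Total) :
    P.totalBr (P.of i x) (P.totalBr (P.of j y) z)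
      = P.totalBr (P.totalBr (P.of i x) (P.of j y)) z
        + (-1 : K) ^ (i * j) • P.totalBr (P.of j y) (P.totalBr (P.of i x) z) := by
  refine P.total_linearMap_ext (f := P.totalBr (P.of i x) ∘ₗ P.totalBr (P.of j y))
    (f' := P.totalBr (P.totalBr (P.of i x) (P.of j y))
      + (-1 : K) ^ (i * j) • (P.totalBr (P.of j y) ∘ₗ P.totalBr (P.of i x))) (fun l z => ?_) z
  simp only [LinearMap.comp_apply, LinearMap.add_apply, LinearMap.smul_apply, totalBr_of]
  rw [of_congr (add_left_comm j i l) (y := ⟨_, add_left_comm j i l ▸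
      (P.brHom j (i + l) y (P.brHom i l x z)).2⟩) rfl, ← map_smul,
    of_congr (add_assoc i j l) (y := ⟨_, add_assoc i j l ▸
      (P.brHom (i + j) l (P.brHom i j x y) z).2⟩) rfl, ← map_add]
  exact of_congr rfl (P.jacobi i j l x x.2 y y.2 z z.2)

theorem totalBr_leibniz (i : ℤ) (x : P.G i) (y : P.Total) :
    P.totalD (P.totalBr (P.of i x) y)
      = P.totalBr (P.totalD (P.of i x)) y
        + (-1 : K) ^ i • P.totalBr (P.of i x) (P.totalD y) := by
  refine P.total_linearMap_ext (f := P.totalD ∘ₗ P.totalBr (P.of i x))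
    (f' := P.totalBr (P.totalD (P.of i x))
      + (-1 : K) ^ i • (P.totalBr (P.of i x) ∘ₗ P.totalD)) (fun j y => ?_) y
  simp only [LinearMap.comp_apply, LinearMap.add_apply, LinearMap.smul_apply, totalBr_of,
    totalD_of]
  rw [of_congr (add_right_comm i 1 j) (y := ⟨_, add_right_comm i 1 j ▸
      (P.brHom (i + 1) j (P.dHom i x) y).2⟩) rfl,
    of_congr (add_assoc i j 1).symm (y := ⟨_, (add_assoc i j 1).symm ▸
      (P.brHom i (j + 1) x (P.dHom j y)).2⟩) rfl, ← map_smul, ← map_add]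
  exact of_congr rfl (P.leibniz i j x x.2 y y.2)

theorem isInternal_range_of : IsInternal fun i => LinearMap.range (P.of i) := by
  refine (Decomposition.ofLinearMap _ (toModule K ℤ _ fun i =>
    lof K ℤ (fun i => LinearMap.range (P.of i)) i ∘ₗ (P.of i).rangeRestrict) ?_ ?_).isInternal
  · exact linearMap_ext K fun i => LinearMap.ext fun x => by simp
  · refine linearMap_ext K fun i => LinearMap.ext fun ⟨_, x, hx⟩ => ?_
    subst hx
    simp only [LinearMap.comp_apply, coeLinearMap_lof, toModule_lof]
    rfl

/-- The DGLA with homogeneous components `P.G i`. -/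
noncomputable def toDGLAStruct : DGLAStruct K P.Total where
  grading i := LinearMap.range (P.of i)
  isInternal := P.isInternal_range_of
  d := P.totalD
  d_degree := by rintro i _ ⟨x, rfl⟩; exact ⟨_, (P.totalD_of i x).symm⟩
  d_sq := P.totalD_totalD
  bracket := P.totalBr
  bracket_degree := by rintro i j _ ⟨x, rfl⟩ _ ⟨y, rfl⟩; exact ⟨_, (P.totalBr_of i j x y).symm⟩
  bracket_skew := by rintro i j _ ⟨x, rfl⟩ _ ⟨y, rfl⟩; exact P.totalBr_skew i j x y
  bracket_jacobi := by rintro i j _ ⟨x, rfl⟩ _ ⟨y, rfl⟩; exact P.totalBr_jacobi i j x y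
  bracket_leibniz := by rintro i _ ⟨x, rfl⟩; exact P.totalBr_leibniz i x

theorem totalD_of_eq_zero_iff {i : ℤ} (x : P.G i) : P.totalD (P.of i x) = 0 ↔ P.d i x = 0 := by
  rw [totalD_of]
  exact (map_eq_zero_iff _ (DirectSum.of_injective (i + 1))).trans Subtype.ext_iff

section Lift

variable {A : Type*} [AddCommGroup A] [Module K A] {g : DGLAStruct K A}

/-- A morphism from `P` to a DGLA, given by its homogeneous components. -/
noncomputable def lift (f : ∀ i, P.G i →ₗ[K] A) (hf : ∀ i x, f i x ∈ g.grading i)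
    (hd : ∀ i x, f (i + 1) (P.dHom i x) = g.d (f i x))
    (hbr : ∀ i j x y, f (i + j) (P.brHom i j x y) = g.bracket (f i x) (f j y)) :
    DGLAStructHom P.toDGLAStruct g where
  toFun := toModule K ℤ _ f
  map_grading := by rintro i _ ⟨x, rfl⟩; simpa using hf i x
  map_d := P.total_linearMap_ext (f := toModule K ℤ _ f ∘ₗ P.totalD)
    (f' := g.d ∘ₗ toModule K ℤ _ f) fun i x => by simpa using hd i x
  map_bracket x y := by
    refine P.total_linearMap_ext (f := toModule K ℤ _ f ∘ₗ P.totalBr.flip y)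
      (f' := g.bracket.flip (toModule K ℤ _ f y) ∘ₗ toModule K ℤ _ f) (fun i x => ?_) x
    refine P.total_linearMap_ext (f := toModule K ℤ _ f ∘ₗ P.totalBr (P.of i x))
      (f' := g.bracket (toModule K ℤ _ f (P.of i x)) ∘ₗ toModule K ℤ _ f) (fun j y => ?_) y
    simpa using hbr i j x y

@[simp]
theorem lift_of (f : ∀ i, P.G i →ₗ[K] A) (hf hd hbr) (i : ℤ) (x : P.G i) :
    (P.lift (g := g) f hf hd hbr).toFun (P.of i x) = f i x :=
  toModule_lof ..

end Lift

end GradedDGLA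

theorem DGLAStructHom.isQuasiIso_of_lifting {K : Type*} [Field K] {L M : Type*}
    [AddCommGroup L] [Module K L] [AddCommGroup M] [Module K M]
    {g : DGLAStruct K L} {h : DGLAStruct K M} (f : DGLAStructHom g h)
    (inj : ∀ i, ∀ x ∈ g.grading i, g.d x = 0 → f.toFun x ∈ LinearMap.range h.d →
      x ∈ LinearMap.range g.d)
    (surj : ∀ i, ∀ y ∈ h.grading i, h.d y = 0 → ∃ x ∈ g.grading i, g.d x = 0 ∧
      f.toFun x - y ∈ LinearMap.range h.d) : f.IsQuasiIso := by
  refine fun i => ⟨(injective_iff_map_eq_zero _).mpr fun a ha => ?_, fun b => ?_⟩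
  · obtain ⟨⟨x, hxg, hxd⟩, rfl⟩ := Submodule.Quotient.mk_surjective _ a
    exact (Submodule.Quotient.mk_eq_zero _).mpr
      ⟨hxg, inj i x hxg hxd ((Submodule.Quotient.mk_eq_zero _).mp ha).2⟩
  · obtain ⟨⟨y, hyg, hyd⟩, rfl⟩ := Submodule.Quotient.mk_surjective _ b
    obtain ⟨x, hxg, hxd, hxy⟩ := surj i y hyg hyd
    exact ⟨Submodule.Quotient.mk ⟨x, hxg, hxd⟩, (Submodule.Quotient.eq _).mpr
      ⟨sub_mem (f.map_grading i x hxg) hyg, hxy⟩⟩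

namespace GradedDGLA

variable {K : Type*} [Field K] {W : Type*} [AddCommGroup W] [Module K W] (P : GradedDGLA K W)
  {A : Type*} [AddCommGroup A] [Module K A] {g : DGLAStruct K A}

theorem lift_isQuasiIso (f : ∀ i, P.G i →ₗ[K] A) (hf hd hbr)
    (inj : ∀ i (x : P.G i), P.d i x = 0 → f i x ∈ LinearMap.range g.d →
      ∃ z ∈ P.G (i - 1), P.d (i - 1) z = x)
    (surj : ∀ i, ∀ y ∈ g.grading i, g.d y = 0 → ∃ x : P.G i, P.d i x = 0 ∧
      f i x - y ∈ LinearMap.range g.d) : (P.lift (g := g) f hf hd hbr).IsQuasiIso := by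
  refine DGLAStructHom.isQuasiIso_of_lifting _ ?_ fun i y hy hdy => ?_
  · rintro i _ ⟨x, rfl⟩ hdx hfx
    rw [lift_of] at hfx
    obtain ⟨z, hz, hzx⟩ := inj i x ((P.totalD_of_eq_zero_iff x).mp hdx) hfx
    exact ⟨P.of (i - 1) ⟨z, hz⟩, (P.totalD_of _ _).trans (of_congr (sub_add_cancel i 1) hzx)⟩
  · obtain ⟨x, hdx, hxy⟩ := surj i y hy hdy
    exact ⟨P.of i x, ⟨x, rfl⟩, (P.totalD_of_eq_zero_iff x).mpr hdx, by rwa [lift_of]⟩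

/-- The sub-DGLA with homogeneous components `H i`. -/
def restrict (H : ℤ → Submodule K W) (hH : ∀ i, H i ≤ P.G i)
    (hd : ∀ i, ∀ x ∈ H i, P.d i x ∈ H (i + 1))
    (hbr : ∀ i j, ∀ x ∈ H i, ∀ y ∈ H j, P.br i j x y ∈ H (i + j)) : GradedDGLA K W where
  G := H
  d := P.d
  br := P.br
  d_mem := hd
  d_sq i x hx := P.d_sq i x (hH i hx)
  br_mem := hbr
  skew i j x hx y hy := P.skew i j x (hH i hx) y (hH j hy)
  jacobi i j l x hx y hy z hz := P.jacobi i j l x (hH i hx) y (hH j hy) z (hH l hz)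
  leibniz i j x hx y hy := P.leibniz i j x (hH i hx) y (hH j hy)

/-- The graded vector space `V` as a DGLA with zero differential and zero bracket. -/
def zero (V : ℤ → Submodule K W) : GradedDGLA K W where
  G := V
  d := 0
  br := 0
  d_mem := by simp
  d_sq := by simp
  br_mem := by simp
  skew := by simp
  jacobi := by simp
  leibniz := by simp

end GradedDGLA

theorem exists_between_inf_le_and_sup_eq {α : Type*} [Lattice α] [BoundedOrder α]
    [IsModularLattice α] [ComplementedLattice α] {c z h : α} (hc : c ≤ h) (hz : z ≤ h) :
    ∃ n, c ≤ n ∧ n ⊓ z ≤ c ∧ n ⊔ z = h := by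
  obtain ⟨y, hdisj, hsup⟩ := IsModularLattice.exists_disjoint_and_sup_eq (sup_le hc hz)
  refine ⟨c ⊔ y, le_sup_left, ?_, by rw [← hsup]; ac_rfl⟩
  calc (c ⊔ y) ⊓ z ≤ (c ⊔ y) ⊓ (c ⊔ z) := inf_le_inf_left _ le_sup_right
    _ = c := by rw [sup_inf_assoc_of_le y le_sup_left, hdisj.symm.eq_bot, sup_bot_eq]

theorem DGLA.HomotopyAbelian.of_isQuasiIso {K : Type u} [Field K] {X Y : DGLA.{u, v} K}
    (hX : X.HomotopyAbelian) {f : DGLAStructHom X.str Y.str} (hf : f.IsQuasiIso) :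
    Y.HomotopyAbelian :=
  let ⟨Z, hZ, hXZ⟩ := hX
  ⟨Z, hZ, .trans _ X _ (.symm _ _ (.rel _ _ ⟨f, hf⟩)) hXZ⟩

namespace GradedDGLA

variable {K : Type u} [Field K] {W : Type v} [AddCommGroup W] [Module K W] {P : GradedDGLA K W}

theorem isAbelian_zero (V : ℤ → Submodule K W) :
    (DGLA.mk (K := K) _ (zero V).toDGLAStruct).IsAbelian := by
  intro x y
  refine (zero V).total_linearMap_ext (f := (zero V).totalBr.flip y) (f' := 0) (fun i x => ?_) x
  refine (zero V).total_linearMap_ext (f := (zero V).totalBr (of _ i x)) (f' := 0) (fun j y => ?_) y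
  rw [totalBr_of]
  exact map_zero _

theorem totalD_zero (V : ℤ → Submodule K W) (x : (zero V).Total) : (zero V).totalD x = 0 :=
  (zero V).total_linearMap_ext (f' := 0) (fun i x => ((zero V).totalD_of i x).trans (map_zero _)) x

theorem homotopyAbelian_of_splitting {V N : ℤ → Submodule K W}
    (hVN : ∀ i, Disjoint (V i) (N i)) (hsup : ∀ i, V i ⊔ N i = P.G i)
    (hV : ∀ i, ∀ v ∈ V i, P.d i v = 0)
    (hd : ∀ i, ∀ x ∈ P.G i, P.d i x ∈ N (i + 1))
    (hbr : ∀ i j, ∀ x ∈ P.G i, ∀ y ∈ P.G j, P.br i j x y ∈ N (i + j))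
    (hN : ∀ i, ∀ x ∈ N i, P.d i x = 0 → ∃ z ∈ P.G (i - 1), P.d (i - 1) z = x) :
    DGLA.HomotopyAbelian (DGLA.mk (K := K) _ P.toDGLAStruct) := by
  choose N' hNN' hc using fun i => (hVN i).symm.exists_isCompl
  let π i : W →ₗ[K] V i := (V i).projectionOnto (N' i) (hc i).symm
  have hπV i (v : V i) : π i v = v := Submodule.projectionOnto_apply_left (hc i).symm v
  have hπN i (x : W) (hx : x ∈ N i) : π i x = 0 :=
    (Submodule.projectionOnto_apply_eq_zero_iff (hc i).symm).mpr (hNN' i hx)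
  let f i : P.G i →ₗ[K] (zero V).Total := (zero V).of i ∘ₗ (π i).domRestrict (P.G i)
  have hfN i (x : P.G i) (hx : (x : W) ∈ N i) : f i x = 0 :=
    (congrArg ((zero V).of i) (hπN i x hx)).trans (map_zero _)
  refine ⟨_, isAbelian_zero V, .rel _ _ ⟨P.lift (g := (zero V).toDGLAStruct) f
    (fun i x => ⟨_, rfl⟩) (fun i x => ?_) (fun i j x y => ?_), ?_⟩⟩
  · exact (hfN _ _ (hd i x x.2)).trans (totalD_zero V _).symm
  · exact (hfN _ _ (hbr i j x x.2 y y.2)).trans (isAbelian_zero V _ _).symm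
  refine P.lift_isQuasiIso f _ _ _ (fun i x hdx hfx => ?_) ?_
  · have hx0 : f i x = 0 := by
      obtain ⟨y, hy⟩ := hfx
      exact hy.symm.trans (totalD_zero V y)
    obtain ⟨v, hv, n, hn, hvn⟩ := Submodule.mem_sup.mp ((hsup i).ge x.2)
    have hv0 : (⟨v, hv⟩ : V i) = 0 := by
      have : π i x = 0 :=
        DirectSum.of_injective (β := fun i => V i) i (hx0.trans (map_zero _).symm)
      rwa [← hvn, map_add, hπN i n hn, add_zero, hπV i ⟨v, hv⟩] at this
    rw [Submodule.mk_eq_zero] at hv0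
    rw [hv0, zero_add] at hvn
    exact hN i x (by rwa [← hvn]) hdx
  · rintro i _ ⟨v, rfl⟩ -
    refine ⟨⟨v, hsup i ▸ Submodule.mem_sup_left v.2⟩, hV i v v.2, ?_⟩
    rw [show f i ⟨v, _⟩ = (zero V).of i v from congrArg ((zero V).of i) (hπV i v), sub_self]
    exact zero_mem _

theorem exists_splitting {C T : ℤ → Submodule K W} (hC : ∀ i, C i ≤ P.G i)
    (hexact : ∀ i, ∀ c ∈ C i, P.d i c = 0 → ∃ z ∈ P.G (i - 1), P.d (i - 1) z = c)
    (hT : ∀ i, T i ≤ P.G i ⊓ LinearMap.ker (P.d i))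
    (hdT : ∀ i, ∀ x ∈ P.G i, P.d i x ∈ T (i + 1)) :
    ∃ V N : ℤ → Submodule K W, (∀ i, Disjoint (V i) (N i)) ∧ (∀ i, C i ≤ N i) ∧
      (∀ i, N i ≤ P.G i) ∧ (∀ i, Disjoint (T i) (V i)) ∧
      (∀ i, T i ⊔ V i = P.G i ⊓ LinearMap.ker (P.d i)) ∧
      ∀ i, ∀ c ∈ N i, P.d i c = 0 → ∃ n ∈ N (i - 1), P.d (i - 1) n = c := by
  choose V hTV hTVZ using fun i => IsModularLattice.exists_disjoint_and_sup_eq (hT i)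
  choose N hCN hNZ hNG using fun i =>
    exists_between_inf_le_and_sup_eq (hC i) (inf_le_left : _ ⊓ LinearMap.ker (P.d i) ≤ P.G i)
  have hNG' i : N i ≤ P.G i := le_sup_left.trans (hNG i).le
  have hNexact i (c : W) (hc : c ∈ N i) (hdc : P.d i c = 0) :
      ∃ n ∈ N (i - 1), P.d (i - 1) n = c := by
    obtain ⟨z, hz, rfl⟩ := hexact i c (hNZ i ⟨hc, hNG' i hc, hdc⟩) hdc
    obtain ⟨n, hn, ζ, hζ, rfl⟩ := Submodule.mem_sup.mp ((hNG (i - 1)).ge hz)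
    exact ⟨n, hn, by rw [map_add, LinearMap.mem_ker.mp hζ.2, add_zero]⟩
  refine ⟨V, N, fun i => Submodule.disjoint_def.mpr fun x hxV hxN => ?_, hCN, hNG', hTV, hTVZ,
    hNexact⟩
  obtain ⟨n, hn, rfl⟩ := hNexact i x hxN ((le_sup_right.trans (hTVZ i).le) hxV).2
  refine Submodule.disjoint_def.mp (hTV i) _ ?_ hxV
  have := hdT (i - 1) n (hNG' _ hn)
  rwa [sub_add_cancel] at this

variable {A : Type v} [AddCommGroup A] [Module K A] {g : DGLAStruct K A}

/-- Let `V` complement, inside the cocycles of `P`, those which become exact in `g`, and let `N`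
be an acyclic subcomplex containing `C`: then `g ← V ⊕ N → V` are quasi-isomorphisms. -/
theorem homotopyAbelian_of_exact (C : ℤ → Submodule K W) (hC : ∀ i, C i ≤ P.G i)
    (hdC : ∀ i, ∀ x ∈ P.G i, P.d i x ∈ C (i + 1))
    (hbrC : ∀ i j, ∀ x ∈ P.G i, ∀ y ∈ P.G j, P.br i j x y ∈ C (i + j))
    (hexact : ∀ i, ∀ c ∈ C i, P.d i c = 0 → ∃ z ∈ P.G (i - 1), P.d (i - 1) z = c)
    (p : ℤ → W →ₗ[K] A) (hpg : ∀ i, ∀ x ∈ P.G i, p i x ∈ g.grading i)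
    (hpd : ∀ i, ∀ x ∈ P.G i, p (i + 1) (P.d i x) = g.d (p i x))
    (hpbr : ∀ i j, ∀ x ∈ P.G i, ∀ y ∈ P.G j,
      p (i + j) (P.br i j x y) = g.bracket (p i x) (p j y))
    (hlift : ∀ i, ∀ a ∈ g.grading i, g.d a = 0 → ∃ x ∈ P.G i, P.d i x = 0 ∧ p i x = a) :
    DGLA.HomotopyAbelian (DGLA.mk (K := K) A g) := by
  let T i := (P.G i ⊓ LinearMap.ker (P.d i)) ⊓ (LinearMap.range g.d).comap (p i)
  obtain ⟨V, N, hVN, hCN, hNG, hTV, hTVZ, hNexact⟩ := exists_splitting (T := T) hC hexact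
    (fun i => inf_le_left)
    fun i x hx => ⟨⟨P.d_mem i x hx, P.d_sq i x hx⟩, p i x, (hpd i x hx).symm⟩
  have hVZ i : V i ≤ P.G i ⊓ LinearMap.ker (P.d i) := le_sup_right.trans (hTVZ i).le
  have hVNG i : V i ⊔ N i ≤ P.G i := sup_le ((hVZ i).trans inf_le_left) (hNG i)
  let H := P.restrict (fun i => V i ⊔ N i) hVNG
    (fun i x hx => le_sup_right (a := V _) (hCN _ (hdC i x (hVNG i hx))))
    (fun i j x hx y hy => le_sup_right (a := V _) (hCN _ (hbrC i j x (hVNG i hx) y (hVNG j hy))))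
  have hH := homotopyAbelian_of_splitting (P := H) hVN (fun i => rfl)
    (fun i v hv => (hVZ i hv).2) (fun i x hx => hCN _ (hdC i x (hVNG i hx)))
    (fun i j x hx y hy => hCN _ (hbrC i j x (hVNG i hx) y (hVNG j hy)))
    (fun i c hc hdc => (hNexact i c hc hdc).imp fun n hn => ⟨le_sup_right (a := V _) hn.1, hn.2⟩)
  refine hH.of_isQuasiIso (Y := DGLA.mk A g) (H.lift_isQuasiIso (g := g)
    (fun i => (p i).domRestrict _)
    (fun i x => hpg i x (hVNG i x.2)) (fun i x => hpd i x (hVNG i x.2))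
    (fun i j x y => hpbr i j x (hVNG i x.2) y (hVNG j y.2)) (fun i x hdx hpx => ?_)
    fun i a ha hda => ?_)
  · obtain ⟨v, hv, n, hn, hvn⟩ := Submodule.mem_sup.mp x.2
    have hxT : v + n ∈ T i := hvn ▸ ⟨⟨hVNG i x.2, hdx⟩, hpx⟩
    have hdn : P.d i n = 0 := by
      have hdvn : P.d i (v + n) = 0 := hxT.1.2
      rwa [map_add, LinearMap.mem_ker.mp (hVZ i hv).2, zero_add] at hdvn
    obtain ⟨m, hm, rfl⟩ := hNexact i n hn hdn
    have hdT : P.d (i - 1) m ∈ T i :=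
      ⟨⟨hNG i hn, hdn⟩, p (i - 1) m, by rw [← hpd _ m (hNG _ hm), sub_add_cancel]⟩
    have hv0 : v = 0 :=
      Submodule.disjoint_def.mp (hTV i) v ((Submodule.add_mem_iff_left _ hdT).mp hxT) hv
    exact ⟨m, le_sup_right (a := V _) hm, by rw [← hvn, hv0, zero_add]; rfl⟩
  · obtain ⟨x, hx, hdx, rfl⟩ := hlift i a ha hda
    obtain ⟨τ, hτ, v, hv, rfl⟩ := Submodule.mem_sup.mp ((hTVZ i).ge ⟨hx, hdx⟩)
    refine ⟨⟨v, le_sup_left (a := V i) (b := N i) hv⟩, (hVZ i hv).2, ?_⟩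
    have : p i v - p i (τ + v) = -p i τ := by rw [map_add]; abel
    exact this ▸ neg_mem hτ.2

end GradedDGLA

/-- A differential graded module over the DGLA `P`: degree `l` is the subspace `E l` of `V`, and
`act i l` is the action of elements of degree `i` on vectors of degree `l`. -/
structure DGRep {K : Type*} [Field K] {W : Type*} [AddCommGroup W] [Module K W]
    (P : GradedDGLA K W) (V : Type*) [AddCommGroup V] [Module K V] where
  E : ℤ → Submodule K V
  δ : ℤ → V →ₗ[K] V
  act : ℤ → ℤ → W →ₗ[K] V →ₗ[K] V
  δ_mem : ∀ l, ∀ r ∈ E l, δ l r ∈ E (l + 1)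
  δ_sq : ∀ l, ∀ r ∈ E l, δ (l + 1) (δ l r) = 0
  act_mem : ∀ i l, ∀ x ∈ P.G i, ∀ r ∈ E l, act i l x r ∈ E (i + l)
  act_br : ∀ i j l, ∀ x ∈ P.G i, ∀ y ∈ P.G j, ∀ r ∈ E l,
    act (i + j) l (P.br i j x y) r
      = act i (j + l) x (act j l y r) - (-1 : K) ^ (i * j) • act j (i + l) y (act i l x r)
  δ_act : ∀ i l, ∀ x ∈ P.G i, ∀ r ∈ E l,
    δ (i + l) (act i l x r) = act (i + 1) l (P.d i x) r + (-1 : K) ^ i • act i (l + 1) x (δ l r)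

namespace DGRep

variable {K : Type*} [Field K] {W : Type*} [AddCommGroup W] [Module K W] {P : GradedDGLA K W}
  {V : Type*} [AddCommGroup V] [Module K V] (M : DGRep P V)

/-- The degree `i` component of the semidirect product of `P` with its module `M`. -/
def semidirect (i : ℤ) : Submodule K (W × V) := (P.G i).prod (M.E i)

/-- The bracket `[(x, r), (y, s)] = ([x, y], x·s ∓ y·r)` of the semidirect product. -/
def semidirectBr (i j : ℤ) : W × V →ₗ[K] W × V →ₗ[K] W × V :=
  LinearMap.mk₂ K (fun x y => (P.br i j x.1 y.1,
      M.act i j x.1 y.2 - (-1 : K) ^ (i * j) • M.act j i y.1 x.2))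
    (fun _ _ _ => by simp; module) (fun _ _ _ => by simp; module)
    (fun _ _ _ => by simp; module) (fun _ _ _ => by simp; module)

@[simp]
theorem semidirectBr_apply (i j : ℤ) (x y : W × V) : M.semidirectBr i j x y
    = (P.br i j x.1 y.1, M.act i j x.1 y.2 - (-1 : K) ^ (i * j) • M.act j i y.1 x.2) :=
  rfl

variable {i j l : ℤ} {x y z : W × V}

theorem semidirectBr_mem (hx : x ∈ M.semidirect i) (hy : y ∈ M.semidirect j) :
    M.semidirectBr i j x y ∈ M.semidirect (i + j) :=
  ⟨P.br_mem i j _ hx.1 _ hy.1, sub_mem (M.act_mem i j _ hx.1 _ hy.2)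
    (Submodule.smul_mem _ _ (add_comm j i ▸ M.act_mem j i _ hy.1 _ hx.2))⟩

theorem semidirectBr_skew (hx : x ∈ M.semidirect i) (hy : y ∈ M.semidirect j) :
    M.semidirectBr i j x y = -((-1 : K) ^ (i * j) • M.semidirectBr j i y x) := by
  refine Prod.ext (P.skew i j _ hx.1 _ hy.1) ?_
  simp only [semidirectBr_apply, Prod.snd_neg, Prod.smul_snd, neg_one_zpow_eq_ite, mul_comm j i]
  split_ifs <;> module

theorem semidirectBr_jacobi (hx : x ∈ M.semidirect i) (hy : y ∈ M.semidirect j)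
    (hz : z ∈ M.semidirect l) :
    M.semidirectBr i (j + l) x (M.semidirectBr j l y z)
      = M.semidirectBr (i + j) l (M.semidirectBr i j x y) z
        + (-1 : K) ^ (i * j) • M.semidirectBr j (i + l) y (M.semidirectBr i l x z) := by
  refine Prod.ext (P.jacobi i j l _ hx.1 _ hy.1 _ hz.1) ?_
  have hxy := M.act_br i j l _ hx.1 _ hy.1 _ hz.2
  have hxz := M.act_br i l j _ hx.1 _ hz.1 _ hy.2
  have hyz := M.act_br j l i _ hy.1 _ hz.1 _ hx.2
  rw [add_comm l j] at hxz
  rw [add_comm l i, add_comm j i] at hyz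
  simp only [semidirectBr_apply, Prod.snd_add, Prod.smul_snd, map_sub, map_smul, hxy, hxz, hyz,
    neg_one_zpow_eq_ite, Int.even_mul, Int.even_add]
  by_cases hi : Even i <;> by_cases hj : Even j <;> by_cases hl : Even l <;>
    simp [hi, hj, hl] <;> module

/-- The semidirect product of `P` with `M`, with differential `(x, r) ↦ (dx, δr ± x·v)` twisted by
a cocycle `v` of degree one. -/
def twistedSemidirect (v : V) (hv : v ∈ M.E 1) (hδv : M.δ 1 v = 0) : GradedDGLA K (W × V) where
  G := M.semidirect
  d i := (P.d i ∘ₗ LinearMap.fst K W V).prod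
    (M.δ i ∘ₗ LinearMap.snd K W V + (-1 : K) ^ i • (M.act i 1).flip v ∘ₗ LinearMap.fst K W V)
  br := M.semidirectBr
  d_mem i x hx := ⟨P.d_mem i _ hx.1,
    add_mem (M.δ_mem i _ hx.2) (Submodule.smul_mem _ _ (M.act_mem i 1 _ hx.1 v hv))⟩
  d_sq i x hx := by
    have := M.δ_act i 1 _ hx.1 v hv
    refine Prod.ext (P.d_sq i _ hx.1) ?_
    simp [M.δ_sq i _ hx.2, this, hδv, zpow_add_one₀]
  br_mem _ _ _ hx _ hy := M.semidirectBr_mem hx hy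
  skew _ _ _ hx _ hy := M.semidirectBr_skew hx hy
  jacobi _ _ _ _ hx _ hy _ hz := M.semidirectBr_jacobi hx hy hz
  leibniz i j x hx y hy := by
    refine Prod.ext (P.leibniz i j _ hx.1 _ hy.1) ?_
    have hxs := M.δ_act i j _ hx.1 _ hy.2
    have hyr := M.δ_act j i _ hy.1 _ hx.2
    have hbr := M.act_br i j 1 _ hx.1 _ hy.1 v hv
    rw [add_comm j i] at hyr
    simp only [LinearMap.prod_apply, Function.prod_apply, LinearMap.comp_apply,
      LinearMap.fst_apply, LinearMap.snd_apply, LinearMap.add_apply, LinearMap.smul_apply,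
      LinearMap.flip_apply, semidirectBr_apply, Prod.snd_add, Prod.smul_snd,
      map_sub, map_add, map_smul, hxs, hyr, hbr]
    simp only [neg_one_zpow_eq_ite, Int.even_mul, Int.even_add]
    by_cases hi : Even i <;> by_cases hj : Even j <;>
      simp [hi, hj] <;> module

end DGRep

namespace GradedDGLA

variable {K : Type*} [Field K] {W : Type*} [AddCommGroup W] [Module K W] (P : GradedDGLA K W)

/-- The DGLA `P` acting on itself by brackets, shifted by one degree. -/
def adjointShift : DGRep P W where
  E l := P.G (l + 1)
  δ l := P.d (l + 1)
  act i l := P.br i (l + 1)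
  δ_mem l := P.d_mem (l + 1)
  δ_sq l := P.d_sq (l + 1)
  act_mem i l x hx r hr := add_assoc i l 1 ▸ P.br_mem i (l + 1) x hx r hr
  act_br i j l x hx y hy r hr := by
    rw [add_assoc, add_assoc, P.jacobi i j (l + 1) x hx y hy r hr]
    abel
  δ_act i l x hx r hr := by
    rw [add_assoc, P.leibniz i (l + 1) x hx r hr]

/-- The mapping cone of the identity of `P`: pairs `(α, β)` of degrees `n` and `n + 1`, with
`d (α, β) = (dα ± β, dβ)`. -/
def cone : GradedDGLA K (W × W) where
  G := P.adjointShift.semidirect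
  d i := (P.d i ∘ₗ LinearMap.fst K W W + (-1 : K) ^ i • LinearMap.snd K W W).prod
    (P.d (i + 1) ∘ₗ LinearMap.snd K W W)
  br := P.adjointShift.semidirectBr
  d_mem i x hx := ⟨add_mem (P.d_mem i _ hx.1) (Submodule.smul_mem _ _ hx.2), P.d_mem _ _ hx.2⟩
  d_sq i x hx := by
    refine Prod.ext ?_ (P.d_sq _ _ hx.2)
    simp [P.d_sq i _ hx.1, zpow_add_one₀]
  br_mem _ _ _ hx _ hy := P.adjointShift.semidirectBr_mem hx hy
  skew _ _ _ hx _ hy := P.adjointShift.semidirectBr_skew hx hy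
  jacobi _ _ _ _ hx _ hy _ hz := P.adjointShift.semidirectBr_jacobi hx hy hz
  leibniz i j x hx y hy := by
    have hxy := P.leibniz i j _ hx.1 _ hy.1
    have hxs := P.leibniz i (j + 1) _ hx.1 _ hy.2
    have hyr := P.leibniz j (i + 1) _ hy.1 _ hx.2
    have hry := P.skew (i + 1) j _ hx.2 _ hy.1
    have hrs := P.skew (i + 1) (j + 1) _ hx.2 _ hy.2
    rw [← add_assoc] at hxs
    rw [← add_assoc, add_comm j i] at hyr
    refine Prod.ext ?_ ?_ <;>
      simp only [adjointShift, LinearMap.prod_apply, Function.prod_apply, LinearMap.comp_apply,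
        LinearMap.fst_apply, LinearMap.snd_apply, LinearMap.add_apply, LinearMap.smul_apply,
        DGRep.semidirectBr_apply, Prod.fst_add, Prod.smul_fst, Prod.snd_add, Prod.smul_snd,
        map_sub, map_add, map_smul, hxs, hyr, hxy, hry, hrs] <;>
      simp only [neg_one_zpow_eq_ite, Int.even_mul, Int.even_add] <;>
      by_cases hi : Even i <;> by_cases hj : Even j <;>
      simp [hi, hj] <;> module

end GradedDGLA

section DerivedBracket

variable {K : Type*} [Field K] {R : Type*} [Ring R] [Algebra K R]

/-- The binary bracket `[a, b] = (-1)^i (Q(ab) - Q(a)b) - a Q(b)` derived from an odd operator `Q`,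
for `a` of degree `i`: the failure of `Q` to be a derivation. -/
def derivedBracket (Q : R →ₗ[K] R) (i : ℤ) : R →ₗ[K] R →ₗ[K] R :=
  (-1 : K) ^ i • ((LinearMap.mul K R).compr₂ Q - LinearMap.mul K R ∘ₗ Q) -
    (LinearMap.mul K R).compl₂ Q

theorem derivedBracket_apply (Q : R →ₗ[K] R) (i : ℤ) (a b : R) :
    derivedBracket Q i a b = (-1 : K) ^ i • (Q (a * b) - Q a * b) - a * Q b :=
  rfl

theorem derivedBracket_one {Q : R →ₗ[K] R} (hQ : Q 1 = 0) (i : ℤ) (a : R) :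
    derivedBracket Q i a 1 = 0 := by
  simp [derivedBracket_apply, hQ]

theorem derivedBracket_eq_of_even_iff {i j : ℤ} (h : Even i ↔ Even j) (Q : R →ₗ[K] R) :
    derivedBracket Q i = derivedBracket Q j := by
  simp only [derivedBracket, neg_one_zpow_eq_ite, h]

end DerivedBracket

/-- A graded-commutative Batalin–Vilkovisky algebra of degree `-1`, i.e. with an operator `Q` of
degree `1` and square zero whose derived brackets are derivations of the product; all axioms are
required for homogeneous elements only. -/
structure HomogeneousBV (K : Type*) [Field K] (R : Type*) [Ring R] [Algebra K R] where
  G : ℤ → Submodule K R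
  one_mem : 1 ∈ G 0
  mul_mem : ∀ i j, ∀ a ∈ G i, ∀ b ∈ G j, a * b ∈ G (i + j)
  mul_gcomm : ∀ i j, ∀ a ∈ G i, ∀ b ∈ G j, a * b = (-1 : K) ^ (i * j) • (b * a)
  Q : R →ₗ[K] R
  Q_mem : ∀ i, ∀ a ∈ G i, Q a ∈ G (i + 1)
  Q_sq : ∀ i, ∀ a ∈ G i, Q (Q a) = 0
  Q_one : Q 1 = 0
  poisson : ∀ i j l, ∀ a ∈ G i, ∀ b ∈ G j, ∀ c ∈ G l, derivedBracket Q i a (b * c)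
    = derivedBracket Q i a b * c + (-1 : K) ^ ((i + 1) * j) • (b * derivedBracket Q i a c)

namespace HomogeneousBV

variable {K : Type*} [Field K] {R : Type*} [Ring R] [Algebra K R] (𝓑 : HomogeneousBV K R)
  {i j l : ℤ} {a b c : R}

theorem derivedBracket_mem (ha : a ∈ 𝓑.G i) (hb : b ∈ 𝓑.G j) :
    derivedBracket 𝓑.Q i a b ∈ 𝓑.G (i + j + 1) := by
  refine sub_mem (Submodule.smul_mem _ _ (sub_mem (𝓑.Q_mem _ _ (𝓑.mul_mem _ _ _ ha _ hb)) ?_)) ?_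
  · exact add_right_comm i 1 j ▸ 𝓑.mul_mem _ _ _ (𝓑.Q_mem _ _ ha) _ hb
  · exact add_assoc i j 1 ▸ 𝓑.mul_mem _ _ _ ha _ (𝓑.Q_mem _ _ hb)

theorem Q_derivedBracket (ha : a ∈ 𝓑.G i) (hb : b ∈ 𝓑.G j) :
    𝓑.Q (derivedBracket 𝓑.Q i a b) = derivedBracket 𝓑.Q (i + 1) (𝓑.Q a) b
      + (-1 : K) ^ (i + 1) • derivedBracket 𝓑.Q i a (𝓑.Q b) := by
  simp only [derivedBracket_apply, map_sub, map_smul, 𝓑.Q_sq _ _ (𝓑.mul_mem _ _ _ ha _ hb),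
    𝓑.Q_sq _ _ ha, 𝓑.Q_sq _ _ hb, neg_one_zpow_eq_ite, Int.even_add]
  by_cases hi : Even i <;> simp [hi]

theorem derivedBracket_skew (ha : a ∈ 𝓑.G i) (hb : b ∈ 𝓑.G j) :
    derivedBracket 𝓑.Q i a b
      = -((-1 : K) ^ ((i + 1) * (j + 1)) • derivedBracket 𝓑.Q j b a) := by
  simp only [derivedBracket_apply, 𝓑.mul_gcomm _ _ _ ha _ hb,
    𝓑.mul_gcomm _ _ _ (𝓑.Q_mem _ _ ha) _ hb, 𝓑.mul_gcomm _ _ _ ha _ (𝓑.Q_mem _ _ hb), map_smul,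
    neg_one_zpow_eq_ite, Int.even_add, Int.even_mul]
  by_cases hi : Even i <;> by_cases hj : Even j <;> simp [hi, hj] <;> module

theorem derivedBracket_jacobi (ha : a ∈ 𝓑.G i) (hb : b ∈ 𝓑.G j) (hc : c ∈ 𝓑.G l) :
    derivedBracket 𝓑.Q i a (derivedBracket 𝓑.Q j b c)
      = derivedBracket 𝓑.Q (i + j + 1) (derivedBracket 𝓑.Q i a b) c
        + (-1 : K) ^ ((i + 1) * (j + 1)) •
          derivedBracket 𝓑.Q j b (derivedBracket 𝓑.Q i a c) := by
  have hQa := 𝓑.Q_mem _ _ ha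
  have hQb := 𝓑.Q_mem _ _ hb
  have hQc := 𝓑.Q_mem _ _ hc
  have habc := 𝓑.Q_derivedBracket ha (𝓑.mul_mem _ _ _ hb _ hc)
  rw [𝓑.poisson _ _ _ _ ha _ hb _ hc, 𝓑.poisson _ _ _ _ hQa _ hb _ hc, map_add, map_smul] at habc
  have hab := congrArg (· * c) (𝓑.Q_derivedBracket ha hb)
  have hac := congrArg (b * ·) (𝓑.Q_derivedBracket ha hc)
  have hbc : derivedBracket 𝓑.Q i a (derivedBracket 𝓑.Q j b c) = _ :=
    congrArg (derivedBracket 𝓑.Q i a) (derivedBracket_apply 𝓑.Q j b c)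
  rw [map_sub, map_smul, map_sub, 𝓑.poisson _ _ _ _ ha _ hQb _ hc,
    𝓑.poisson _ _ _ _ ha _ hb _ hQc] at hbc
  rw [hbc, derivedBracket_apply 𝓑.Q (i + j + 1), derivedBracket_apply 𝓑.Q j b]
  simp only [add_mul, mul_add, smul_mul_assoc, mul_smul_comm] at hab hac
  simp only [neg_one_zpow_eq_ite, Int.even_add, Int.even_mul] at habc hab hac ⊢
  by_cases hi : Even i <;> by_cases hj : Even j <;> simp [hi, hj] at habc hab hac ⊢
  · linear_combination (norm := module) habc - hab - hac
  · linear_combination (norm := module) hab + hac - habc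
  · linear_combination (norm := module) hab + hac - habc
  · linear_combination (norm := module) habc - hab + hac

theorem Q_mul (i : ℤ) (a b : R) :
    𝓑.Q (a * b) = 𝓑.Q a * b + (-1 : K) ^ i • (derivedBracket 𝓑.Q i a b + a * 𝓑.Q b) := by
  rw [derivedBracket_apply, neg_one_zpow_eq_ite]
  split_ifs <;> module

/-- The DGLA of a BV algebra with its derived bracket, placed so that the bracket has degree `0`. -/
def toGradedDGLA : GradedDGLA K R where
  G i := 𝓑.G (i - 1)
  d _ := 𝓑.Q
  br i _ := derivedBracket 𝓑.Q (i - 1)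
  d_mem i a ha := sub_add_eq_add_sub i 1 1 ▸ 𝓑.Q_mem _ a ha
  d_sq i := 𝓑.Q_sq (i - 1)
  br_mem i j a ha b hb := by
    convert 𝓑.derivedBracket_mem ha hb using 2
    ring
  skew i j a ha b hb := by simpa using 𝓑.derivedBracket_skew ha hb
  jacobi i j l a ha b hb c hc := by
    have hab : i - 1 + (j - 1) + 1 = i + j - 1 := by ring
    simpa [hab] using 𝓑.derivedBracket_jacobi ha hb hc
  leibniz i j a ha b hb := by
    simpa [sub_add_eq_add_sub] using 𝓑.Q_derivedBracket ha hb

theorem derivedBracket_map {D : R →ₗ[K] R} (hDQ : ∀ a, D (𝓑.Q a) = 𝓑.Q (D a))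
    (hDmul : ∀ a b, D (a * b) = D a * b + a * D b) (i : ℤ) (a b : R) :
    D (derivedBracket 𝓑.Q i a b)
      = derivedBracket 𝓑.Q i (D a) b + derivedBracket 𝓑.Q i a (D b) := by
  simp only [derivedBracket_apply, map_sub, map_smul, hDQ, hDmul, map_add]
  module

/-- The action of the cone of `𝓑.toGradedDGLA` on `R × R`, whose elements `(r₀, r₁)` stand for
`r₀ + r₁ ds`: a pair `(α, β)` acts by `[α, ·] + β`, with a term `∂α ds` accounting for the
derivative `∂ = D` of the path `α`. -/
def pathAct (D : R →ₗ[K] R) (i : ℤ) : R × R →ₗ[K] R × R →ₗ[K] R × R :=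
  LinearMap.mk₂ K (fun x r =>
      (derivedBracket 𝓑.Q i x.1 r.1 + x.2 * r.1,
        (-1 : K) ^ i • (D x.1 * r.1 - (derivedBracket 𝓑.Q i x.1 r.2 + x.2 * r.2))))
    (fun _ _ _ => by ext <;> simp [add_mul] <;> module)
    (fun _ _ _ => by ext <;> simp; module)
    (fun _ _ _ => by ext <;> simp [mul_add] <;> module)
    (fun _ _ _ => by ext <;> simp; module)

@[simp]
theorem pathAct_apply (D : R →ₗ[K] R) (i : ℤ) (x r : R × R) : 𝓑.pathAct D i x r
    = (derivedBracket 𝓑.Q i x.1 r.1 + x.2 * r.1,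
      (-1 : K) ^ i • (D x.1 * r.1 - (derivedBracket 𝓑.Q i x.1 r.2 + x.2 * r.2))) :=
  rfl

variable {D : R →ₗ[K] R} {x y r : R × R}

theorem pathAct_mem (hDG : ∀ i, ∀ a ∈ 𝓑.G i, D a ∈ 𝓑.G i)
    (hx : x.1 ∈ 𝓑.G i) (hx' : x.2 ∈ 𝓑.G (i + 1)) (hr : r.1 ∈ 𝓑.G l) (hr' : r.2 ∈ 𝓑.G (l - 1)) :
    𝓑.pathAct D i x r ∈ (𝓑.G (i + l + 1)).prod (𝓑.G (i + l)) := by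
  have hDxr := 𝓑.derivedBracket_mem hx hr'
  have hxr := 𝓑.mul_mem _ _ _ hx' _ hr
  have hxr' := 𝓑.mul_mem _ _ _ hx' _ hr'
  rw [add_assoc, sub_add_cancel] at hDxr
  rw [add_right_comm] at hxr
  rw [add_assoc, add_sub_cancel] at hxr'
  exact ⟨add_mem (𝓑.derivedBracket_mem hx hr) hxr, Submodule.smul_mem _ _
    (sub_mem (𝓑.mul_mem _ _ _ (hDG _ _ hx) _ hr) (add_mem hDxr hxr'))⟩

theorem pathAct_bracket (hDG : ∀ i, ∀ a ∈ 𝓑.G i, D a ∈ 𝓑.G i)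
    (hDQ : ∀ a, D (𝓑.Q a) = 𝓑.Q (D a)) (hDmul : ∀ a b, D (a * b) = D a * b + a * D b)
    (hx : x.1 ∈ 𝓑.G i) (hx' : x.2 ∈ 𝓑.G (i + 1)) (hy : y.1 ∈ 𝓑.G j) (hy' : y.2 ∈ 𝓑.G (j + 1))
    (hr : r.1 ∈ 𝓑.G l) (hr' : r.2 ∈ 𝓑.G (l - 1)) :
    𝓑.pathAct D (i + j + 1) (derivedBracket 𝓑.Q i x.1 y.1, derivedBracket 𝓑.Q i x.1 y.2
        - (-1 : K) ^ ((i + 1) * (j + 1)) • derivedBracket 𝓑.Q j y.1 x.2) r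
      = 𝓑.pathAct D i x (𝓑.pathAct D j y r)
        - (-1 : K) ^ ((i + 1) * (j + 1)) • 𝓑.pathAct D j y (𝓑.pathAct D i x r) := by
  obtain ⟨α, β⟩ := x
  obtain ⟨α', β'⟩ := y
  obtain ⟨r₀, r₁⟩ := r
  have hDα := hDG _ _ hx
  have hDα' := hDG _ _ hy
  have hββ' (r : R) : β * (β' * r) = (-1 : K) ^ ((i + 1) * (j + 1)) • (β' * (β * r)) := by
    rw [← mul_assoc, 𝓑.mul_gcomm _ _ _ hx' _ hy', smul_mul_assoc, mul_assoc]
  have hβα' : β * (D α' * r₀) = (-1 : K) ^ ((i + 1) * j) • (D α' * (β * r₀)) := by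
    rw [← mul_assoc, 𝓑.mul_gcomm _ _ _ hx' _ hDα', smul_mul_assoc, mul_assoc]
  have hαβ' : D α * (β' * r₀) = (-1 : K) ^ (i * (j + 1)) • (β' * (D α * r₀)) := by
    rw [← mul_assoc, 𝓑.mul_gcomm _ _ _ hDα _ hy', smul_mul_assoc, mul_assoc]
  have hjac₀ := 𝓑.derivedBracket_jacobi hx hy hr
  have hjac₁ := 𝓑.derivedBracket_jacobi hx hy hr'
  have hskew := 𝓑.derivedBracket_skew hDα hy
  simp only at hjac₀ hjac₁ hskew
  ext
  · simp only [pathAct_apply, map_add, 𝓑.poisson _ _ _ _ hx _ hy' _ hr,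
      𝓑.poisson _ _ _ _ hy _ hx' _ hr, mul_add, sub_mul, smul_mul_assoc, hββ', hjac₀,
      Prod.fst_sub, Prod.smul_fst, neg_one_zpow_eq_ite, Int.even_mul, Int.even_add]
    by_cases hi : Even i <;> by_cases hj : Even j <;> simp [hi, hj] <;> module
  · simp only [pathAct_apply, map_add, map_sub, map_smul, 𝓑.poisson _ _ _ _ hx _ hy' _ hr',
      𝓑.poisson _ _ _ _ hy _ hx' _ hr', 𝓑.poisson _ _ _ _ hx _ hDα' _ hr,
      𝓑.poisson _ _ _ _ hy _ hDα _ hr, 𝓑.derivedBracket_map hDQ hDmul, hskew,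
      mul_add, mul_sub, sub_mul, add_mul, smul_mul_assoc, mul_smul_comm, neg_mul, hββ', hβα', hαβ',
      hjac₁, Prod.snd_sub, Prod.smul_snd, neg_one_zpow_eq_ite, Int.even_mul, Int.even_add]
    by_cases hi : Even i <;> by_cases hj : Even j <;> simp [hi, hj] <;> module

/-- The DG representation `pathAct` on paths `r₀ + r₁ ds`, with differential `Q + ds ∂/∂s`. -/
def pathRep (hDG : ∀ i, ∀ a ∈ 𝓑.G i, D a ∈ 𝓑.G i)
    (hDQ : ∀ a, D (𝓑.Q a) = 𝓑.Q (D a)) (hDmul : ∀ a b, D (a * b) = D a * b + a * D b) :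
    DGRep 𝓑.toGradedDGLA.cone (R × R) where
  E l := (𝓑.G (l - 1)).prod (𝓑.G (l - 1 - 1))
  δ _ := (𝓑.Q ∘ₗ LinearMap.fst K R R).prod
    (D ∘ₗ LinearMap.fst K R R - 𝓑.Q ∘ₗ LinearMap.snd K R R)
  act i _ := 𝓑.pathAct D (i - 1)
  δ_mem l r hr := by
    have hQr := 𝓑.Q_mem _ _ hr.2
    rw [sub_add_cancel] at hQr
    rw [add_sub_cancel_right]
    exact ⟨sub_add_cancel l 1 ▸ 𝓑.Q_mem _ _ hr.1, sub_mem (hDG _ _ hr.1) hQr⟩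
  δ_sq l r hr := by simp [𝓑.Q_sq _ _ hr.1, 𝓑.Q_sq _ _ hr.2, hDQ]
  act_mem i l x hx r hr := by
    have h := 𝓑.pathAct_mem hDG hx.1 (sub_add_eq_add_sub i 1 1 ▸ hx.2) hr.1 hr.2
    rwa [show i - 1 + (l - 1) = i + l - 1 - 1 by ring, sub_add_cancel] at h
  act_br i j l x hx y hy r hr := by
    have h := 𝓑.pathAct_bracket hDG hDQ hDmul hx.1 (sub_add_eq_add_sub i 1 1 ▸ hx.2)
      hy.1 (sub_add_eq_add_sub j 1 1 ▸ hy.2) hr.1 hr.2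
    rwa [show i - 1 + (j - 1) + 1 = i + j - 1 by ring, sub_add_cancel, sub_add_cancel] at h
  δ_act i l x hx r hr := by
    have hQx (r : R) := 𝓑.Q_mul i x.2 r
    have hQDx := 𝓑.Q_mul (i - 1) (D x.1) r.1
    simp only [LinearMap.prod_apply, LinearMap.sub_apply, LinearMap.comp_apply, LinearMap.fst_apply,
      LinearMap.snd_apply, Function.prod_apply, pathAct_apply, map_add, map_sub, hDmul, map_smul,
      𝓑.derivedBracket_map hDQ hDmul, 𝓑.Q_derivedBracket hx.1 hr.1, 𝓑.Q_derivedBracket hx.1 hr.2,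
      hQx, hQDx, GradedDGLA.cone, toGradedDGLA, LinearMap.add_apply, LinearMap.smul_apply]
    simp only [neg_one_zpow_eq_ite, Int.even_add, Int.even_sub]
    by_cases hi : Even i <;> simp [hi, hDQ, add_mul, mul_sub] <;> constructor <;> abel

end HomogeneousBV

namespace HomogeneousBV

variable {K : Type*} [Field K] {R : Type*} [Ring R] [Algebra K R] (𝓑 : HomogeneousBV K R)
  (S : Type*) [CommRing S] [Algebra K S] {i j : ℤ}

/-- The degree `i` component of the base change of `𝓑` along `S`, which is in degree `0`. -/
def baseChangeG (i : ℤ) : Submodule K (R ⊗[K] S) :=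
  LinearMap.range ((𝓑.G i).subtype.rTensor S)

variable {S}

theorem tmul_mem_baseChangeG {a : R} (ha : a ∈ 𝓑.G i) (s : S) : a ⊗ₜ s ∈ 𝓑.baseChangeG S i :=
  ⟨⟨a, ha⟩ ⊗ₜ s, rfl⟩

variable {𝓑} in
@[elab_as_elim]
theorem baseChangeG_induction {motive : ∀ x ∈ 𝓑.baseChangeG S i, Prop}
    (tmul : ∀ a (ha : a ∈ 𝓑.G i) s, motive (a ⊗ₜ s) (𝓑.tmul_mem_baseChangeG ha s))
    (add : ∀ x y hx hy, motive x hx → motive y hy → motive (x + y) (add_mem hx hy))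
    {x : R ⊗[K] S} (hx : x ∈ 𝓑.baseChangeG S i) : motive x hx := by
  obtain ⟨t, rfl⟩ := hx
  induction t with
  | zero => simpa using tmul 0 (zero_mem _) 0
  | tmul a s => exact tmul a a.2 s
  | add t t' ht ht' => simpa only [map_add] using add _ _ _ _ ht ht'

theorem derivedBracket_tmul (Q : R →ₗ[K] R) (i : ℤ) (a b : R) (s t : S) :
    derivedBracket (Q.rTensor S) i (a ⊗ₜ s) (b ⊗ₜ t) = derivedBracket Q i a b ⊗ₜ[K] (s * t) := by
  simp only [derivedBracket_apply, Algebra.TensorProduct.tmul_mul_tmul, LinearMap.rTensor_tmul,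
    TensorProduct.sub_tmul, ← TensorProduct.smul_tmul']

variable (S) in
/-- The base change of a BV algebra along a commutative algebra placed in degree `0`. -/
noncomputable def baseChange : HomogeneousBV K (R ⊗[K] S) where
  G := 𝓑.baseChangeG S
  one_mem := 𝓑.tmul_mem_baseChangeG 𝓑.one_mem 1
  mul_mem i j x hx y hy := by
    induction hx using baseChangeG_induction with
    | add x x' _ _ hx hx' => exact add_mul x x' y ▸ add_mem hx hx'
    | tmul a ha s =>
      induction hy using baseChangeG_induction with
      | add y y' _ _ hy hy' => exact mul_add (a ⊗ₜ s) y y' ▸ add_mem hy hy'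
      | tmul b hb t =>
        exact Algebra.TensorProduct.tmul_mul_tmul (R := K) a b s t ▸
          𝓑.tmul_mem_baseChangeG (𝓑.mul_mem i j a ha b hb) (s * t)
  mul_gcomm i j x hx y hy := by
    induction hx using baseChangeG_induction with
    | add x x' _ _ hx hx' => rw [add_mul, mul_add, hx, hx', smul_add]
    | tmul a ha s =>
      induction hy using baseChangeG_induction with
      | add y y' _ _ hy hy' => rw [add_mul, mul_add, hy, hy', smul_add]
      | tmul b hb t =>
        simp [𝓑.mul_gcomm i j a ha b hb, TensorProduct.smul_tmul', mul_comm s t]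
  Q := 𝓑.Q.rTensor S
  Q_mem i x hx := by
    induction hx using baseChangeG_induction with
    | tmul a ha s => exact 𝓑.tmul_mem_baseChangeG (𝓑.Q_mem i a ha) s
    | add x x' _ _ hx hx' => exact map_add (𝓑.Q.rTensor S) x x' ▸ add_mem hx hx'
  Q_sq i x hx := by
    induction hx using baseChangeG_induction with
    | tmul a ha s => simp [𝓑.Q_sq i a ha]
    | add x x' _ _ hx hx' => simp [hx, hx']
  Q_one := by simp [Algebra.TensorProduct.one_def, 𝓑.Q_one]
  poisson i j l x hx y hy z hz := by
    induction hx using baseChangeG_induction with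
    | add x x' _ _ hx hx' =>
      simp only [map_add, LinearMap.add_apply, hx, hx', add_mul, mul_add, smul_add]
      abel
    | tmul a ha s =>
      induction hy using baseChangeG_induction with
      | add y y' _ _ hy hy' => simp only [add_mul, map_add, hy, hy', smul_add]; abel
      | tmul b hb t =>
        induction hz using baseChangeG_induction with
        | add z z' _ _ hz hz' => simp only [mul_add, map_add, hz, hz', smul_add]; abel
        | tmul c hc u =>
          simp [derivedBracket_tmul, 𝓑.poisson i j l a ha b hb c hc, TensorProduct.add_tmul,
            TensorProduct.smul_tmul', mul_assoc, mul_left_comm t s u]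

theorem lTensor_mem_baseChange (f : S →ₗ[K] S) {x : R ⊗[K] S} (hx : x ∈ (𝓑.baseChange S).G i) :
    f.lTensor R x ∈ (𝓑.baseChange S).G i := by
  induction hx using baseChangeG_induction with
  | tmul a ha s => exact 𝓑.tmul_mem_baseChangeG ha (f s)
  | add x x' _ _ hx hx' => exact map_add (f.lTensor R) x x' ▸ add_mem hx hx'

theorem baseChange_Q_lTensor (f : S →ₗ[K] S) (x : R ⊗[K] S) :
    (𝓑.baseChange S).Q (f.lTensor R x) = f.lTensor R ((𝓑.baseChange S).Q x) :=
  LinearMap.congr_fun ((LinearMap.rTensor_comp_lTensor R 𝓑.Q f).trans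
    (LinearMap.lTensor_comp_rTensor R 𝓑.Q f).symm) x

variable (R) in
/-- The specialization `R ⊗ S → R` at a point `φ` of `S`. -/
noncomputable def specialize (φ : S →ₐ[K] K) : R ⊗[K] S →ₐ[K] R :=
  (Algebra.TensorProduct.rid K K R).toAlgHom.comp
    (Algebra.TensorProduct.map (AlgHom.id K R) φ)

@[simp]
theorem specialize_tmul (φ : S →ₐ[K] K) (a : R) (s : S) : specialize R φ (a ⊗ₜ s) = φ s • a := by
  simp [specialize]

variable (φ : S →ₐ[K] K)

theorem specialize_mem {x : R ⊗[K] S} (hx : x ∈ (𝓑.baseChange S).G i) :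
    specialize R φ x ∈ 𝓑.G i := by
  induction hx using baseChangeG_induction with
  | tmul a ha s => exact specialize_tmul φ a s ▸ Submodule.smul_mem _ _ ha
  | add x x' _ _ hx hx' => exact map_add (specialize R φ) x x' ▸ add_mem hx hx'

theorem specialize_Q (x : R ⊗[K] S) :
    specialize R φ ((𝓑.baseChange S).Q x) = 𝓑.Q (specialize R φ x) := by
  induction x with
  | zero => simp
  | tmul a s => simp [baseChange]
  | add x y hx hy => simp only [map_add, hx, hy]

theorem specialize_derivedBracket (i : ℤ) (x y : R ⊗[K] S) :
    specialize R φ (derivedBracket (𝓑.baseChange S).Q i x y)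
      = derivedBracket 𝓑.Q i (specialize R φ x) (specialize R φ y) := by
  simp only [derivedBracket_apply, map_sub, map_smul, map_mul, specialize_Q]

end HomogeneousBV

section Paths

variable {K : Type*} [Field K]

variable (K) in
theorem exists_primitive_vanishing_at_one [CharZero K] :
    ∃ J : K[X] →ₗ[K] K[X], (∀ f, derivative (J f) = f) ∧ (∀ f, (J f).eval 1 = 0) ∧
      ∀ f, J (derivative f) = f - C (f.eval 1) := by
  have hsurj : Function.Surjective (derivative : K[X] →ₗ[K] K[X]) := by
    intro f
    induction f using Polynomial.induction_on' with
    | add f g hf hg =>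
      obtain ⟨f, rfl⟩ := hf
      obtain ⟨g, rfl⟩ := hg
      exact ⟨f + g, map_add _ f g⟩
    | monomial n a =>
      exact ⟨monomial (n + 1) (a / (n + 1)), by simp [Nat.cast_add_one_ne_zero]⟩
  obtain ⟨I, hI⟩ := derivative.exists_rightInverse_of_surjective (LinearMap.range_eq_top.mpr hsurj)
  let J : K[X] →ₗ[K] K[X] := I - CAlgHom.toLinearMap ∘ₗ (aeval (1 : K)).toLinearMap ∘ₗ I
  have hJ (f : K[X]) : J f = I f - C ((I f).eval 1) := by simp [J]
  have hdJ (f : K[X]) : derivative (J f) = f := by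
    simpa [hJ] using LinearMap.congr_fun hI f
  have hJ1 (f : K[X]) : (J f).eval 1 = 0 := by simp [hJ]
  refine ⟨J, hdJ, hJ1, fun f => ?_⟩
  have hconst := eq_C_of_derivative_eq_zero
    (p := J (derivative f) - (f - C (f.eval 1))) (by simp [hdJ])
  have hzero := congrArg (eval 1) hconst
  rw [eval_C, eval_sub, hJ1] at hzero
  rw [← sub_eq_zero, hconst, ← hzero]
  simp

variable {R : Type*} [Ring R] [Algebra K R]

variable (K R) in
/-- Differentiation of polynomial paths in `R` with respect to their parameter. -/
noncomputable def pathDeriv : R ⊗[K] K[X] →ₗ[K] R ⊗[K] K[X] := derivative.lTensor R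

@[simp]
theorem pathDeriv_tmul (a : R) (f : K[X]) : pathDeriv K R (a ⊗ₜ f) = a ⊗ₜ derivative f :=
  rfl

theorem pathDeriv_mul (x y : R ⊗[K] K[X]) :
    pathDeriv K R (x * y) = pathDeriv K R x * y + x * pathDeriv K R y := by
  induction x with
  | zero => simp
  | add x x' hx hx' => simp only [add_mul, map_add, hx, hx']; abel
  | tmul a f =>
    induction y with
    | zero => simp
    | add y y' hy hy' => simp only [mul_add, map_add, hy, hy']; abel
    | tmul b h => simp [derivative_mul, TensorProduct.tmul_add]

variable (R) in
/-- The value of a polynomial path in `R` at time `c`. -/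
noncomputable def evalPath (c : K) : R ⊗[K] K[X] →ₐ[K] R :=
  HomogeneousBV.specialize R (aeval c)

@[simp]
theorem evalPath_tmul (c : K) (a : R) (f : K[X]) : evalPath R c (a ⊗ₜ f) = f.eval c • a := by
  simp [evalPath]

theorem HomogeneousBV.evalPath_mem (𝓑 : HomogeneousBV K R) (c : K) {i : ℤ} {x : R ⊗[K] K[X]}
    (hx : x ∈ (𝓑.baseChange K[X]).G i) : evalPath R c x ∈ 𝓑.G i :=
  𝓑.specialize_mem _ hx

theorem HomogeneousBV.evalPath_Q (𝓑 : HomogeneousBV K R) (c : K) (x : R ⊗[K] K[X]) :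
    evalPath R c ((𝓑.baseChange K[X]).Q x) = 𝓑.Q (evalPath R c x) :=
  𝓑.specialize_Q _ x

theorem HomogeneousBV.evalPath_derivedBracket (𝓑 : HomogeneousBV K R) (c : K) (i : ℤ)
    (x y : R ⊗[K] K[X]) : evalPath R c (derivedBracket (𝓑.baseChange K[X]).Q i x y)
      = derivedBracket 𝓑.Q i (evalPath R c x) (evalPath R c y) :=
  𝓑.specialize_derivedBracket _ i x y

theorem exists_pathPrimitive [CharZero K] (R : Type*) [Ring R] [Algebra K R] :
    ∃ J : K[X] →ₗ[K] K[X], (∀ x, pathDeriv K R (J.lTensor R x) = x) ∧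
      (∀ x, evalPath R (1 : K) (J.lTensor R x) = 0) ∧
      ∀ x, J.lTensor R (pathDeriv K R x) = x - evalPath R (1 : K) x ⊗ₜ 1 := by
  obtain ⟨J, hdJ, hJ1, hJd⟩ := exists_primitive_vanishing_at_one K
  refine ⟨J, fun x => ?_, fun x => ?_, fun x => ?_⟩
  · induction x with
    | zero => simp
    | tmul a f => simp [hdJ]
    | add x y hx hy => rw [map_add, map_add, hx, hy]
  · induction x with
    | zero => simp
    | tmul a f => simp [hJ1]
    | add x y hx hy => rw [map_add, map_add, hx, hy, add_zero]
  · induction x with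
    | zero => simp
    | tmul a f => simp [hJd, TensorProduct.tmul_sub, TensorProduct.smul_tmul, smul_eq_C_mul]
    | add x y hx hy =>
      simp only [map_add, TensorProduct.add_tmul, hx, hy]
      abel

end Paths

namespace HomogeneousBV

variable {K : Type*} [Field K] {R : Type*} [Ring R] [Algebra K R] (𝓑 : HomogeneousBV K R)

/-- The cone of the DGLA of `𝓑` together with the module `R`, both replaced by polynomial paths: in
`((α, β), (r₀, r₁))`, `(α, β)` is a path in the cone and `r₀ + r₁ ds` a path in `R`, on which it
acts. The differential is twisted by `1`. -/
noncomputable def pathDGLA :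
    GradedDGLA K ((R ⊗[K] K[X] × R ⊗[K] K[X]) × (R ⊗[K] K[X] × R ⊗[K] K[X])) :=
  ((𝓑.baseChange K[X]).pathRep (D := pathDeriv K R) (fun _ _ ha => 𝓑.lTensor_mem_baseChange _ ha)
    (fun a => (𝓑.baseChange_Q_lTensor derivative a).symm) pathDeriv_mul).twistedSemidirect (1, 0)
    ⟨(𝓑.baseChange K[X]).one_mem, zero_mem _⟩
    (by
      have hQ := (𝓑.baseChange K[X]).Q_one
      rw [Algebra.TensorProduct.one_def] at hQ ⊢
      simp [pathRep, hQ])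

variable {𝓑} {i : ℤ} {α β r₀ r₁ : R ⊗[K] K[X]}

theorem mem_pathDGLA : ((α, β), r₀, r₁) ∈ 𝓑.pathDGLA.G i ↔
    (α ∈ (𝓑.baseChange K[X]).G (i - 1) ∧ β ∈ (𝓑.baseChange K[X]).G i) ∧
      r₀ ∈ (𝓑.baseChange K[X]).G (i - 1) ∧ r₁ ∈ (𝓑.baseChange K[X]).G (i - 1 - 1) := by
  change (_ ∧ β ∈ (𝓑.baseChange K[X]).G (i + 1 - 1)) ∧ _ ↔ _
  rw [add_sub_cancel_right]
  rfl

theorem pathDGLA_d : 𝓑.pathDGLA.d i ((α, β), r₀, r₁) =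
    (((𝓑.baseChange K[X]).Q α + (-1 : K) ^ i • β, (𝓑.baseChange K[X]).Q β),
      ((𝓑.baseChange K[X]).Q r₀ + (-1 : K) ^ i • β,
        pathDeriv K R r₀ - (𝓑.baseChange K[X]).Q r₁ - pathDeriv K R α)) := by
  have hsign : (-1 : K) ^ i * (-1) ^ (i - 1) = -1 := by
    rw [zpow_sub_one₀ (by simp), ← mul_assoc, ← mul_zpow]
    simp
  simp [pathDGLA, DGRep.twistedSemidirect, GradedDGLA.cone, toGradedDGLA, pathRep, pathAct,
    derivedBracket_one (𝓑.baseChange K[X]).Q_one, smul_smul, hsign, ← sub_eq_add_neg]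

variable {j : ℤ} {α' β' r₀' r₁' : R ⊗[K] K[X]}

theorem pathDGLA_br_fst : (𝓑.pathDGLA.br i j ((α, β), r₀, r₁) ((α', β'), r₀', r₁')).1 =
    (derivedBracket (𝓑.baseChange K[X]).Q (i - 1) α α',
      derivedBracket (𝓑.baseChange K[X]).Q (i - 1) α β'
        - (-1 : K) ^ (i * j) • derivedBracket (𝓑.baseChange K[X]).Q (j - 1) α' β) := by
  rfl

theorem pathDGLA_br_snd_fst : (𝓑.pathDGLA.br i j ((α, β), r₀, r₁) ((α', β'), r₀', r₁')).2.1 =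
    derivedBracket (𝓑.baseChange K[X]).Q (i - 1) α r₀' + β * r₀'
      - (-1 : K) ^ (i * j) • (derivedBracket (𝓑.baseChange K[X]).Q (j - 1) α' r₀ + β' * r₀) := by
  rfl

variable (𝓑) (L : Submodule K R)

/-- The boundary conditions on `pathDGLA` under which `α(1)` is a morphism to the sub-DGLA `L` and
`r₀(0)` a morphism to the complex `R` with zero bracket; on cocycles, `r₀(0)` is cohomologous to
`-α(1)`. -/
noncomputable def pathBoundary :
    Submodule K ((R ⊗[K] K[X] × R ⊗[K] K[X]) × (R ⊗[K] K[X] × R ⊗[K] K[X])) where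
  carrier := {x | (evalPath R (0 : K) x.1.1 = 0 ∧ evalPath R (1 : K) x.1.1 ∈ L) ∧
    (evalPath R (0 : K) x.1.2 = 0 ∧ evalPath R (1 : K) x.1.2 = 0) ∧
      evalPath R (1 : K) x.2.1 = 0}
  add_mem' {x y} hx hy := by
    simp only [Set.mem_ofPred_eq] at hx hy ⊢
    simp [hx, hy, add_mem hx.1.2 hy.1.2]
  zero_mem' := by simp
  smul_mem' c x hx := by
    simp only [Set.mem_ofPred_eq] at hx ⊢
    simp [hx, L.smul_mem c hx.1.2]

variable {L}

theorem mem_pathBoundary : ((α, β), r₀, r₁) ∈ pathBoundary L ↔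
    (evalPath R (0 : K) α = 0 ∧ evalPath R (1 : K) α ∈ L) ∧
      (evalPath R (0 : K) β = 0 ∧ evalPath R (1 : K) β = 0) ∧ evalPath R (1 : K) r₀ = 0 :=
  Iff.rfl

theorem pathDGLA_d_mem_pathBoundary (hQL : ∀ i, ∀ a ∈ 𝓑.G i, a ∈ L → 𝓑.Q a ∈ L)
    {x} (hx : x ∈ 𝓑.pathDGLA.G i ⊓ pathBoundary L) : 𝓑.pathDGLA.d i x ∈ pathBoundary L := by
  obtain ⟨⟨α, β⟩, r₀, r₁⟩ := x
  obtain ⟨hG, ⟨hα₀, hα₁⟩, ⟨hβ₀, hβ₁⟩, hr₁⟩ := hx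
  have hQα := hQL _ _ (𝓑.evalPath_mem 1 (mem_pathDGLA.mp hG).1.1) hα₁
  dsimp only at hα₀ hβ₀ hβ₁ hr₁
  simp [pathDGLA_d, mem_pathBoundary, evalPath_Q, hα₀, hβ₀, hβ₁, hr₁, hQα]

theorem pathDGLA_br_mem_pathBoundary
    (hbrL : ∀ i j, ∀ a ∈ 𝓑.G i, ∀ b ∈ 𝓑.G j, a ∈ L → b ∈ L → derivedBracket 𝓑.Q i a b ∈ L)
    {x y} (hx : x ∈ 𝓑.pathDGLA.G i ⊓ pathBoundary L) (hy : y ∈ 𝓑.pathDGLA.G j ⊓ pathBoundary L) :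
    𝓑.pathDGLA.br i j x y ∈ pathBoundary L := by
  obtain ⟨⟨α, β⟩, r₀, r₁⟩ := x
  obtain ⟨⟨α', β'⟩, r₀', r₁'⟩ := y
  obtain ⟨hG, ⟨hα₀, hα₁⟩, ⟨hβ₀, hβ₁⟩, hr₁⟩ := hx
  obtain ⟨hG', ⟨hα'₀, hα'₁⟩, ⟨hβ'₀, hβ'₁⟩, hr'₁⟩ := hy
  have hαα' := hbrL _ _ _ (𝓑.evalPath_mem 1 (mem_pathDGLA.mp hG).1.1) _
    (𝓑.evalPath_mem 1 (mem_pathDGLA.mp hG').1.1) hα₁ hα'₁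
  dsimp only at hα₀ hβ₀ hβ₁ hr₁ hα'₀ hβ'₀ hβ'₁ hr'₁
  rw [← Prod.mk.eta (p := 𝓑.pathDGLA.br i j _ _), ← Prod.mk.eta (p := (𝓑.pathDGLA.br i j _ _).2)]
  simp only [pathDGLA_br_fst, pathDGLA_br_snd_fst, mem_pathBoundary]
  simp [evalPath_derivedBracket, hα₀, hα'₀, hβ₀, hβ₁, hβ'₀, hβ'₁, hr₁, hr'₁, hαα']

theorem baseChange_Q_tmul (a : R) (f : K[X]) :
    (𝓑.baseChange K[X]).Q (a ⊗ₜ f) = 𝓑.Q a ⊗ₜ f :=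
  rfl

theorem tmul_mem_baseChange {a : R} (ha : a ∈ 𝓑.G i) (f : K[X]) :
    a ⊗ₜ f ∈ (𝓑.baseChange K[X]).G i :=
  𝓑.tmul_mem_baseChangeG ha f

theorem exists_eq_Q_add_of_pathDeriv_eq_Q [CharZero K] {u w : R ⊗[K] K[X]}
    (hw : w ∈ (𝓑.baseChange K[X]).G i) (hu : pathDeriv K R u = (𝓑.baseChange K[X]).Q w) :
    ∃ v ∈ (𝓑.baseChange K[X]).G i, pathDeriv K R v = w ∧ evalPath R (1 : K) v = 0 ∧
      u = (𝓑.baseChange K[X]).Q v + evalPath R (1 : K) u ⊗ₜ 1 := by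
  obtain ⟨J, hdJ, hJ1, hJd⟩ := exists_pathPrimitive (K := K) R
  refine ⟨J.lTensor R w, 𝓑.lTensor_mem_baseChange J hw, hdJ w, hJ1 w, ?_⟩
  rw [𝓑.baseChange_Q_lTensor, ← hu, hJd, sub_add_cancel]

theorem pathDGLA_exact [CharZero K]
    (hexact : ∀ i, ∀ a ∈ 𝓑.G i, 𝓑.Q a ∈ L → ∃ q ∈ 𝓑.G i, q ∈ L ∧ 𝓑.Q q = 𝓑.Q a)
    (hG : ((α, β), r₀, r₁) ∈ 𝓑.pathDGLA.G i) (hL : ((α, β), r₀, r₁) ∈ pathBoundary L)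
    (hr₀ : evalPath R (0 : K) r₀ ∈ (𝓑.G (i - 1 - 1)).map 𝓑.Q)
    (hd : 𝓑.pathDGLA.d i ((α, β), r₀, r₁) = 0) :
    ∃ z ∈ 𝓑.pathDGLA.G (i - 1) ⊓ pathBoundary L,
      𝓑.pathDGLA.d (i - 1) z = ((α, β), r₀, r₁) := by
  obtain ⟨⟨hα, -⟩, -, hr₁⟩ := mem_pathDGLA.mp hG
  obtain ⟨⟨hα₀, hα₁⟩, -, hr₀₁⟩ := mem_pathBoundary.mp hL
  obtain ⟨m, hm, hQm⟩ := hr₀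
  simp only [pathDGLA_d, Prod.mk_eq_zero] at hd
  obtain ⟨⟨hdα, -⟩, -, hdr⟩ := hd
  rw [sub_right_comm, ← map_sub, sub_eq_zero] at hdr
  obtain ⟨v, hv, hdv, hv₁, hr₀α⟩ := 𝓑.exists_eq_Q_add_of_pathDeriv_eq_Q hr₁ hdr
  rw [map_sub, hr₀₁, zero_sub, TensorProduct.neg_tmul, ← sub_eq_add_neg] at hr₀α
  have hα₁Q : 𝓑.Q (evalPath R (0 : K) v - m) = evalPath R (1 : K) α := by
    have h := congrArg (evalPath R (0 : K)) hr₀α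
    simp only [map_sub, hα₀, evalPath_Q, evalPath_tmul, eval_one, one_smul, sub_zero] at h
    rw [map_sub, hQm, h, sub_sub_cancel]
  obtain ⟨q, hq, hqL, hQq⟩ :=
    hexact _ _ (sub_mem (𝓑.evalPath_mem 0 hv) hm) (hα₁Q.symm ▸ hα₁)
  rw [hα₁Q] at hQq
  refine ⟨((q ⊗ₜ X, (-1 : K) ^ (i - 1) • (α - evalPath R (1 : K) α ⊗ₜ X)),
    v - q ⊗ₜ 1 + q ⊗ₜ X, 0), ⟨mem_pathDGLA.mpr ⟨⟨𝓑.tmul_mem_baseChange hq X, ?_⟩, ?_,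
      zero_mem _⟩, mem_pathBoundary.mpr ?_⟩, ?_⟩
  · exact Submodule.smul_mem _ _ (sub_mem hα (𝓑.tmul_mem_baseChange (𝓑.evalPath_mem 1 hα) X))
  · exact add_mem (sub_mem hv (𝓑.tmul_mem_baseChange hq 1)) (𝓑.tmul_mem_baseChange hq X)
  · simp [hα₀, hqL, hv₁]
  · have hQα₁ : 𝓑.Q (evalPath R (1 : K) α) = 0 := hQq ▸ 𝓑.Q_sq _ _ hq
    have hQα : (-1 : K) ^ (i - 1) • (𝓑.baseChange K[X]).Q α = β := by
      rw [eq_neg_of_add_eq_zero_left hdα, smul_neg, smul_smul, zpow_sub_one₀ (by simp),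
        mul_right_comm, ← mul_zpow]
      simp
    rw [pathDGLA_d]
    refine Prod.ext (Prod.ext ?_ ?_) (Prod.ext ?_ ?_) <;>
      simp [baseChange_Q_tmul, hQq, hQα₁, hQα, hdv, smul_smul, ← mul_zpow,
        sub_eq_iff_eq_add.mp hr₀α]

variable {x y : (R ⊗[K] K[X] × R ⊗[K] K[X]) × (R ⊗[K] K[X] × R ⊗[K] K[X])}

theorem evalPath_one_pathDGLA_d (hx : x ∈ pathBoundary L) :
    evalPath R (1 : K) (𝓑.pathDGLA.d i x).1.1 = 𝓑.Q (evalPath R (1 : K) x.1.1) := by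
  obtain ⟨⟨α, β⟩, r₀, r₁⟩ := x
  obtain ⟨-, ⟨-, hβ₁⟩, -⟩ := hx
  dsimp only at hβ₁
  simp [pathDGLA_d, evalPath_Q, hβ₁]

theorem evalPath_zero_pathDGLA_d (hx : x ∈ pathBoundary L) :
    evalPath R (0 : K) (𝓑.pathDGLA.d i x).2.1 = 𝓑.Q (evalPath R (0 : K) x.2.1) := by
  obtain ⟨⟨α, β⟩, r₀, r₁⟩ := x
  obtain ⟨-, ⟨hβ₀, -⟩, -⟩ := hx
  dsimp only at hβ₀
  simp [pathDGLA_d, evalPath_Q, hβ₀]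

theorem evalPath_one_pathDGLA_br : evalPath R (1 : K) (𝓑.pathDGLA.br i j x y).1.1
    = derivedBracket 𝓑.Q (i - 1) (evalPath R (1 : K) x.1.1) (evalPath R (1 : K) y.1.1) :=
  𝓑.evalPath_derivedBracket 1 (i - 1) x.1.1 y.1.1

theorem evalPath_zero_pathDGLA_br (hx : x ∈ pathBoundary L) (hy : y ∈ pathBoundary L) :
    evalPath R (0 : K) (𝓑.pathDGLA.br i j x y).2.1 = 0 := by
  obtain ⟨⟨α, β⟩, r₀, r₁⟩ := x
  obtain ⟨⟨α', β'⟩, r₀', r₁'⟩ := y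
  obtain ⟨⟨hα₀, -⟩, ⟨hβ₀, -⟩, -⟩ := hx
  obtain ⟨⟨hα'₀, -⟩, ⟨hβ'₀, -⟩, -⟩ := hy
  dsimp only at hα₀ hβ₀ hα'₀ hβ'₀
  simp [pathDGLA_br_snd_fst, evalPath_derivedBracket, hα₀, hβ₀, hα'₀, hβ'₀]

theorem exists_pathDGLA_cocycle {a : R} (ha : a ∈ 𝓑.G (i - 1)) (haL : a ∈ L) (hQa : 𝓑.Q a = 0) :
    ∃ x ∈ 𝓑.pathDGLA.G i ⊓ pathBoundary L,
      𝓑.pathDGLA.d i x = 0 ∧ evalPath R (1 : K) x.1.1 = a := by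
  refine ⟨((a ⊗ₜ X, 0), a ⊗ₜ (X - 1), 0), ⟨mem_pathDGLA.mpr ⟨⟨𝓑.tmul_mem_baseChange ha X,
    zero_mem _⟩, 𝓑.tmul_mem_baseChange ha _, zero_mem _⟩, mem_pathBoundary.mpr ?_⟩, ?_, ?_⟩
  · simpa using haL
  · simp [pathDGLA_d, baseChange_Q_tmul, hQa]
  · simp

theorem homotopyAbelian_of_lattice {K R A : Type u} [Field K] [CharZero K] [Ring R] [Algebra K R]
    (𝓑 : HomogeneousBV K R) [AddCommGroup A] [Module K A] {g : DGLAStruct K A} (L : Submodule K R)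
    (hQL : ∀ i, ∀ a ∈ 𝓑.G i, a ∈ L → 𝓑.Q a ∈ L)
    (hbrL : ∀ i j, ∀ a ∈ 𝓑.G i, ∀ b ∈ 𝓑.G j, a ∈ L → b ∈ L → derivedBracket 𝓑.Q i a b ∈ L)
    (hexact : ∀ i, ∀ a ∈ 𝓑.G i, 𝓑.Q a ∈ L → ∃ q ∈ 𝓑.G i, q ∈ L ∧ 𝓑.Q q = 𝓑.Q a)
    (p : R →ₗ[K] A) (hpg : ∀ i, ∀ a ∈ 𝓑.G (i - 1), a ∈ L → p a ∈ g.grading i)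
    (hpd : ∀ i, ∀ a ∈ 𝓑.G i, a ∈ L → p (𝓑.Q a) = g.d (p a))
    (hpbr : ∀ i j, ∀ a ∈ 𝓑.G i, ∀ b ∈ 𝓑.G j, a ∈ L → b ∈ L →
      p (derivedBracket 𝓑.Q i a b) = g.bracket (p a) (p b))
    (hlift : ∀ i, ∀ a ∈ g.grading i, g.d a = 0 → ∃ b ∈ 𝓑.G (i - 1), b ∈ L ∧ 𝓑.Q b = 0 ∧ p b = a) :
    DGLA.HomotopyAbelian (DGLA.mk (K := K) A g) := by
  let P := 𝓑.pathDGLA.restrict (fun i => 𝓑.pathDGLA.G i ⊓ pathBoundary L) (fun _ => inf_le_left)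
    (fun i x hx => ⟨𝓑.pathDGLA.d_mem i x hx.1, 𝓑.pathDGLA_d_mem_pathBoundary hQL hx⟩)
    (fun i j x hx y hy => ⟨𝓑.pathDGLA.br_mem i j x hx.1 y hy.1,
      𝓑.pathDGLA_br_mem_pathBoundary hbrL hx hy⟩)
  let r₀Start := (evalPath R (0 : K)).toLinearMap ∘ₗ LinearMap.fst K _ (R ⊗[K] K[X]) ∘ₗ
    LinearMap.snd K (R ⊗[K] K[X] × R ⊗[K] K[X]) _
  let αEnd := (evalPath R (1 : K)).toLinearMap ∘ₗ LinearMap.fst K _ (R ⊗[K] K[X]) ∘ₗ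
    LinearMap.fst K _ (R ⊗[K] K[X] × R ⊗[K] K[X])
  have hαEnd i x (hx : x ∈ P.G i) : αEnd x ∈ 𝓑.G (i - 1) :=
    𝓑.evalPath_mem 1 (mem_pathDGLA.mp hx.1).1.1
  have hr₀Start i x (hx : x ∈ P.G i) : r₀Start x ∈ 𝓑.G (i - 1) :=
    𝓑.evalPath_mem 0 (mem_pathDGLA.mp hx.1).2.1
  refine P.homotopyAbelian_of_exact
    (fun i => P.G i ⊓ ((𝓑.G (i - 1 - 1)).map 𝓑.Q).comap r₀Start) (fun _ => inf_le_left)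
    (fun i x hx => ⟨P.d_mem i x hx, r₀Start x, ?_, ?_⟩)
    (fun i j x hx y hy => ⟨P.br_mem i j x hx y hy, 0, zero_mem _, ?_⟩)
    (fun i c hc hdc => 𝓑.pathDGLA_exact hexact hc.1.1 hc.1.2 hc.2 hdc)
    (fun _ => p ∘ₗ αEnd) (fun i x hx => hpg i _ (hαEnd i x hx) hx.2.1.2) (fun i x hx => ?_)
    (fun i j x hx y hy => ?_) (fun i a ha hda => ?_)
  · rw [add_sub_cancel_right]
    exact hr₀Start i x hx
  · exact (𝓑.evalPath_zero_pathDGLA_d hx.2).symm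
  · rw [map_zero]
    exact (𝓑.evalPath_zero_pathDGLA_br hx.2 hy.2).symm
  · exact (congrArg p (𝓑.evalPath_one_pathDGLA_d hx.2)).trans
      (hpd _ _ (hαEnd i x hx) hx.2.1.2)
  · exact (congrArg p (𝓑.evalPath_one_pathDGLA_br (j := j))).trans
      (hpbr _ _ _ (hαEnd i x hx) _ (hαEnd j y hy) hx.2.1.2 hy.2.1.2)
  · obtain ⟨b, hb, hbL, hQb, rfl⟩ := hlift i a ha hda
    obtain ⟨x, hx, hdx, hxb⟩ := 𝓑.exists_pathDGLA_cocycle hb hbL hQb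
    exact ⟨x, hx, hdx, congrArg p hxb⟩

end HomogeneousBV

section LaurentSeries

variable {K : Type*} [Field K] {A : Type*} [Ring A] [Algebra K A]

variable (K A) in
/-- The subspace `t^m A[[t]]` of `A((t))`. -/
def orderGE (m : ℤ) : Submodule K (LaurentSeries A) where
  carrier := {x | ∀ p < m, x.coeff p = 0}
  zero_mem' _ _ := rfl
  add_mem' hx hy p hp := by simp [hx p hp, hy p hp]
  smul_mem' c x hx p hp := by simp [hx p hp]

variable {m n : ℤ} {x y z : LaurentSeries A}

variable (K) in
theorem exists_mem_orderGE (x : LaurentSeries A) : ∃ m, x ∈ orderGE K A m :=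
  ⟨x.order, fun _ => HahnSeries.coeff_eq_zero_of_lt_order⟩

theorem single_mul_mem_orderGE {p : ℤ} {a : A} (hx : x ∈ orderGE K A m) :
    HahnSeries.single p a * x ∈ orderGE K A (p + m) := by
  intro q hq
  rw [HahnSeries.coeff_single_mul, hx _ (by omega), mul_zero]

theorem coeff_mul_of_mem_orderGE (hx : x ∈ orderGE K A m) (hy : y ∈ orderGE K A n) (s : ℤ) :
    (x * y).coeff s = ∑ p ∈ Finset.Icc m (s - n), x.coeff p * y.coeff (s - p) := by
  rw [HahnSeries.coeff_mul]
  refine Finset.sum_of_injOn Prod.fst ?_ ?_ ?_ ?_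
  · rintro ⟨p, q⟩ hpq ⟨p', q'⟩ hpq' (rfl : p = p')
    simp only [Finset.mem_coe, Finset.mem_antidiagonal] at hpq hpq'
    simp; omega
  · rintro ⟨p, q⟩ hpq
    simp only [Finset.mem_coe, Finset.mem_antidiagonal, HahnSeries.mem_support,
      Finset.mem_Icc] at hpq ⊢
    have hp : m ≤ p := not_lt.1 fun h => hpq.1 (hx p h)
    have hq : n ≤ q := not_lt.1 fun h => hpq.2.1 (hy q h)
    omega
  · intro p _ hp
    by_contra hne
    exact hp ⟨(p, s - p), by simp [left_ne_zero_of_mul hne, right_ne_zero_of_mul hne], rfl⟩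
  · rintro ⟨p, q⟩ hpq
    obtain rfl : p + q = s := (Finset.mem_antidiagonal.1 hpq).2.2
    simp

theorem mul_mem_orderGE (hx : x ∈ orderGE K A m) (hy : y ∈ orderGE K A n) :
    x * y ∈ orderGE K A (m + n) := by
  intro s hs
  rw [coeff_mul_of_mem_orderGE hx hy, Finset.Icc_eq_empty (by omega), Finset.sum_empty]

/-- The operator on `A((t))` applying `f` to every coefficient. -/
def mapCoeff (f : A →ₗ[K] A) : LaurentSeries A →ₗ[K] LaurentSeries A where
  toFun x := x.map f
  map_add' x y := by ext; simp
  map_smul' c x := by ext; simp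

theorem mapCoeff_coeff (f : A →ₗ[K] A) (x : LaurentSeries A) (p : ℤ) :
    (mapCoeff f x).coeff p = f (x.coeff p) :=
  rfl

theorem mapCoeff_mem_orderGE (f : A →ₗ[K] A) (hx : x ∈ orderGE K A m) :
    mapCoeff f x ∈ orderGE K A m := fun p hp => by
  rw [mapCoeff_coeff, hx p hp, map_zero]

theorem derivedBracket_mapCoeff_coeff (f : A →ₗ[K] A) (i : ℤ) (hx : x ∈ orderGE K A m)
    (hy : y ∈ orderGE K A n) (s : ℤ) :
    (derivedBracket (mapCoeff f) i x y).coeff s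
      = ∑ p ∈ Finset.Icc m (s - n), derivedBracket f i (x.coeff p) (y.coeff (s - p)) := by
  simp only [derivedBracket_apply, HahnSeries.coeff_sub, HahnSeries.coeff_smul, mapCoeff_coeff,
    coeff_mul_of_mem_orderGE hx hy, coeff_mul_of_mem_orderGE (mapCoeff_mem_orderGE f hx) hy,
    coeff_mul_of_mem_orderGE hx (mapCoeff_mem_orderGE f hy), map_sum, Finset.sum_sub_distrib,
    ← Finset.smul_sum]

theorem derivedBracket_mapCoeff_mem_orderGE (f : A →ₗ[K] A) (i : ℤ) (hx : x ∈ orderGE K A m)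
    (hy : y ∈ orderGE K A n) : derivedBracket (mapCoeff f) i x y ∈ orderGE K A (m + n) := by
  intro s hs
  rw [derivedBracket_mapCoeff_coeff f i hx hy, Finset.Icc_eq_empty (by omega), Finset.sum_empty]

theorem derivedBracket_mapCoeff_coeff_add (f : A →ₗ[K] A) (i : ℤ) (hx : x ∈ orderGE K A m)
    (hy : y ∈ orderGE K A n) : (derivedBracket (mapCoeff f) i x y).coeff (m + n)
      = derivedBracket f i (x.coeff m) (y.coeff n) := by
  simp [derivedBracket_mapCoeff_coeff f i hx hy]

theorem derivedBracket_mapCoeff_single (f : A →ₗ[K] A) (i p : ℤ) (a : A) (y : LaurentSeries A) :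
    derivedBracket (mapCoeff f) i (HahnSeries.single p a) y
      = HahnSeries.single p 1 * mapCoeff (derivedBracket f i a) y := by
  ext s
  have hmap : mapCoeff f (HahnSeries.single p a) = HahnSeries.single p (f a) := by
    ext q
    by_cases hq : q = p <;> simp [mapCoeff_coeff, hq]
  simp [derivedBracket_apply, hmap, HahnSeries.coeff_single_mul, mapCoeff_coeff]

theorem single_one_mul_comm (p : ℤ) (x : LaurentSeries A) :
    HahnSeries.single p 1 * x = x * HahnSeries.single p 1 := by
  ext; simp [HahnSeries.coeff_single_mul, HahnSeries.coeff_mul_single]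

theorem mapCoeff_mul {f : A →ₗ[K] A} {c : K}
    (h : ∀ p q, f (x.coeff p * y.coeff q)
      = f (x.coeff p) * y.coeff q + c • (x.coeff p * f (y.coeff q))) :
    mapCoeff f (x * y) = mapCoeff f x * y + c • (x * mapCoeff f y) := by
  obtain ⟨m, hx⟩ := exists_mem_orderGE K x
  obtain ⟨n, hy⟩ := exists_mem_orderGE K y
  ext s
  simp only [HahnSeries.coeff_add, HahnSeries.coeff_smul, mapCoeff_coeff,
    coeff_mul_of_mem_orderGE hx hy, coeff_mul_of_mem_orderGE (mapCoeff_mem_orderGE f hx) hy,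
    coeff_mul_of_mem_orderGE hx (mapCoeff_mem_orderGE f hy), map_sum, h, Finset.sum_add_distrib,
    ← Finset.smul_sum]

theorem sub_sum_single_mem_orderGE (hx : x ∈ orderGE K A m) (n : ℤ) :
    x - ∑ p ∈ Finset.Ico m n, HahnSeries.single p (x.coeff p) ∈ orderGE K A n := by
  intro q hq
  rw [HahnSeries.coeff_sub, HahnSeries.coeff_sum, sub_eq_zero]
  by_cases hmq : m ≤ q
  · rw [Finset.sum_eq_single_of_mem q (Finset.mem_Ico.2 ⟨hmq, hq⟩) fun p _ hp =>
      HahnSeries.coeff_single_of_ne hp.symm, HahnSeries.coeff_single_same]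
  · rw [hx q (not_le.1 hmq), Finset.sum_eq_zero fun p hp =>
      HahnSeries.coeff_single_of_ne fun (h : q = p) => hmq (h ▸ (Finset.mem_Ico.1 hp).1)]

theorem eq_zero_of_forall_single {P : LaurentSeries A →ₗ[K] LaurentSeries A} {N : ℤ}
    (hP : ∀ m, ∀ x ∈ orderGE K A m, P x ∈ orderGE K A (m + N)) {x : LaurentSeries A}
    (hsingle : ∀ p, P (HahnSeries.single p (x.coeff p)) = 0) : P x = 0 := by
  obtain ⟨m, hx⟩ := exists_mem_orderGE K x
  ext s
  have htail := hP _ _ (sub_sum_single_mem_orderGE hx (s - N + 1))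
  rw [map_sub, map_sum, Finset.sum_eq_zero fun p _ => hsingle p, sub_zero] at htail
  exact htail s (by omega)

theorem derivedBracket_mapCoeff_poisson {f : A →ₗ[K] A} {i : ℤ} {c : K}
    (h : ∀ p q r, derivedBracket f i (x.coeff p) (y.coeff q * z.coeff r)
      = derivedBracket f i (x.coeff p) (y.coeff q) * z.coeff r
        + c • (y.coeff q * derivedBracket f i (x.coeff p) (z.coeff r))) :
    derivedBracket (mapCoeff f) i x (y * z) = derivedBracket (mapCoeff f) i x y * z
      + c • (y * derivedBracket (mapCoeff f) i x z) := by
  obtain ⟨m, hy⟩ := exists_mem_orderGE K y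
  obtain ⟨n, hz⟩ := exists_mem_orderGE K z
  let D := (derivedBracket (mapCoeff f) i).flip
  let P := D (y * z) - (LinearMap.mulRight K z ∘ₗ D y + c • LinearMap.mulLeft K y ∘ₗ D z)
  have hP (x) : P x = derivedBracket (mapCoeff f) i x (y * z)
      - (derivedBracket (mapCoeff f) i x y * z + c • (y * derivedBracket (mapCoeff f) i x z)) :=
    rfl
  refine sub_eq_zero.1 ((hP x).symm.trans
    (eq_zero_of_forall_single (N := m + n) (fun r x hx => ?_) fun p => ?_))
  · have hD {y n} (hy : y ∈ orderGE K A n) := derivedBracket_mapCoeff_mem_orderGE f i hx hy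
    refine hP x ▸ sub_mem (hD (mul_mem_orderGE hy hz)) (add_mem ?_ (Submodule.smul_mem _ c ?_))
    · exact add_assoc r m n ▸ mul_mem_orderGE (hD hy) hz
    · exact add_left_comm m r n ▸ mul_mem_orderGE hy (hD hz)
  · simp only [hP, derivedBracket_mapCoeff_single, mapCoeff_mul (h p), mul_add, mul_smul_comm,
      ← mul_assoc, single_one_mul_comm p y, sub_self]

end LaurentSeries

/-- A differential Batalin–Vilkovisky algebra of degree `k`, all of whose axioms, including the
anticommutation of `d` and `Δ`, are required for homogeneous elements only. The seven-term relation
appears as the Poisson identity of the derived bracket. -/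
structure HomogeneousDBV (K : Type*) [Field K] (k : ℤ) (A : Type*) [Ring A] [Algebra K A] where
  F : ℤ → Submodule K A
  one_mem : 1 ∈ F 0
  mul_mem : ∀ i j, ∀ a ∈ F i, ∀ b ∈ F j, a * b ∈ F (i + j)
  mul_gcomm : ∀ i j, ∀ a ∈ F i, ∀ b ∈ F j, a * b = (-1 : K) ^ (i * j) • (b * a)
  d : A →ₗ[K] A
  d_mem : ∀ i, ∀ a ∈ F i, d a ∈ F (i + 1)
  d_sq : ∀ i, ∀ a ∈ F i, d (d a) = 0
  d_mul : ∀ i j, ∀ a ∈ F i, ∀ b ∈ F j, d (a * b) = d a * b + (-1 : K) ^ i • (a * d b)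
  Δ : A →ₗ[K] A
  Δ_mem : ∀ i, ∀ a ∈ F i, Δ a ∈ F (i - k)
  Δ_sq : ∀ i, ∀ a ∈ F i, Δ (Δ a) = 0
  Δ_one : Δ 1 = 0
  d_Δ_add_Δ_d : ∀ i, ∀ a ∈ F i, d (Δ a) + Δ (d a) = 0
  poisson : ∀ i j l, ∀ a ∈ F i, ∀ b ∈ F j, ∀ c ∈ F l, derivedBracket Δ i a (b * c)
    = derivedBracket Δ i a b * c + (-1 : K) ^ ((i + 1) * j) • (b * derivedBracket Δ i a c)

theorem even_sub_mul_iff {n : ℤ} (hn : Even n) (i p : ℤ) : Even (i - p * n) ↔ Even i := by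
  simp [Int.even_sub, hn.mul_left]

namespace HomogeneousDBV

variable {K : Type*} [Field K] {k : ℤ} {A : Type*} [Ring A] [Algebra K A]
  (𝓑 : HomogeneousDBV K k A) {i j m n p : ℤ} {x y : LaurentSeries A}

theorem d_one : 𝓑.d 1 = 0 := by
  simpa using 𝓑.d_mul 0 0 1 𝓑.one_mem 1 𝓑.one_mem

/-- The Laurent series homogeneous of degree `i` when `t` has degree `k + 1`. -/
def laurentGrading (i : ℤ) : Submodule K (LaurentSeries A) where
  carrier := {x | ∀ p, x.coeff p ∈ 𝓑.F (i - p * (k + 1))}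
  zero_mem' _ := zero_mem _
  add_mem' hx hy p := add_mem (hx p) (hy p)
  smul_mem' c _ hx p := Submodule.smul_mem _ c (hx p)

/-- The operator `tΔ - d` on `A((t))`, where `t` is regarded as having degree `k + 1`, so that
`tΔ` and `d` have the same degree. -/
noncomputable def laurentQ : LaurentSeries A →ₗ[K] LaurentSeries A :=
  LinearMap.mulLeft K (HahnSeries.single 1 1) ∘ₗ mapCoeff 𝓑.Δ - mapCoeff 𝓑.d

theorem laurentQ_coeff (x : LaurentSeries A) (p : ℤ) :
    (𝓑.laurentQ x).coeff p = 𝓑.Δ (x.coeff (p - 1)) - 𝓑.d (x.coeff p) := by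
  simp [laurentQ, mapCoeff_coeff, HahnSeries.coeff_single_mul]

theorem laurentQ_mem (hx : x ∈ 𝓑.laurentGrading i) : 𝓑.laurentQ x ∈ 𝓑.laurentGrading (i + 1) := by
  intro p
  rw [laurentQ_coeff]
  refine sub_mem ?_ ?_
  · convert 𝓑.Δ_mem _ _ (hx (p - 1)) using 2; ring
  · convert 𝓑.d_mem _ _ (hx p) using 2; ring

theorem laurentQ_mem_orderGE (hx : x ∈ orderGE K A m) : 𝓑.laurentQ x ∈ orderGE K A m := by
  intro p hp
  rw [laurentQ_coeff, hx p hp, hx (p - 1) (by omega), map_zero, map_zero, sub_zero]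

theorem laurentQ_coeff_of_mem_orderGE (hx : x ∈ orderGE K A m) :
    (𝓑.laurentQ x).coeff m = -𝓑.d (x.coeff m) := by
  rw [laurentQ_coeff, hx _ (sub_one_lt m), map_zero, zero_sub]

theorem laurentQ_sq (hx : x ∈ 𝓑.laurentGrading i) : 𝓑.laurentQ (𝓑.laurentQ x) = 0 := by
  ext p
  simp only [laurentQ_coeff, map_sub, 𝓑.Δ_sq _ _ (hx _), 𝓑.d_sq _ _ (hx _), zero_sub, sub_zero,
    ← neg_add', HahnSeries.coeff_zero, neg_eq_zero]
  rw [add_comm, 𝓑.d_Δ_add_Δ_d _ _ (hx _)]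

theorem derivedBracket_laurentQ (hk : Even (k + 1)) (hx : x ∈ 𝓑.laurentGrading i)
    (hy : y ∈ 𝓑.laurentGrading j) : derivedBracket 𝓑.laurentQ i x y
      = HahnSeries.single 1 1 * derivedBracket (mapCoeff 𝓑.Δ) i x y := by
  have hd : mapCoeff 𝓑.d (x * y) = mapCoeff 𝓑.d x * y + (-1 : K) ^ i • (x * mapCoeff 𝓑.d y) :=
    mapCoeff_mul fun p q => by
      simpa only [neg_one_zpow_eq_ite, even_sub_mul_iff hk] using 𝓑.d_mul _ _ _ (hx p) _ (hy q)
  simp only [derivedBracket_apply, laurentQ, LinearMap.sub_apply, LinearMap.comp_apply,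
    LinearMap.mulLeft_apply, hd, mul_sub, sub_mul, mul_smul_comm, ← mul_assoc,
    single_one_mul_comm 1 x, neg_one_zpow_eq_ite]
  split_ifs <;> module

theorem laurentGrading_mul_mem (hx : x ∈ 𝓑.laurentGrading i) (hy : y ∈ 𝓑.laurentGrading j) :
    x * y ∈ 𝓑.laurentGrading (i + j) := by
  obtain ⟨m, hm⟩ := exists_mem_orderGE K x
  obtain ⟨n, hn⟩ := exists_mem_orderGE K y
  intro s
  rw [coeff_mul_of_mem_orderGE hm hn]
  refine sum_mem fun p _ => ?_
  convert 𝓑.mul_mem _ _ _ (hx p) _ (hy (s - p)) using 2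
  ring

theorem laurentGrading_mul_gcomm (hk : Even (k + 1)) (hx : x ∈ 𝓑.laurentGrading i)
    (hy : y ∈ 𝓑.laurentGrading j) : x * y = (-1 : K) ^ (i * j) • (y * x) := by
  obtain ⟨m, hm⟩ := exists_mem_orderGE K x
  obtain ⟨n, hn⟩ := exists_mem_orderGE K y
  ext s
  rw [HahnSeries.coeff_smul, coeff_mul_of_mem_orderGE hm hn, coeff_mul_of_mem_orderGE hn hm,
    Finset.smul_sum]
  refine Finset.sum_nbij' (s - ·) (s - ·) (by grind) (by grind) (by simp) (by simp) fun p _ => ?_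
  rw [𝓑.mul_gcomm _ _ _ (hx p) _ (hy (s - p)), sub_sub_cancel]
  simp only [neg_one_zpow_eq_ite, Int.even_mul, even_sub_mul_iff hk]

theorem derivedBracket_Δ_poisson (hk : Even (k + 1)) {l : ℤ} {z : LaurentSeries A}
    (hx : x ∈ 𝓑.laurentGrading i) (hy : y ∈ 𝓑.laurentGrading j) (hz : z ∈ 𝓑.laurentGrading l) :
    derivedBracket (mapCoeff 𝓑.Δ) i x (y * z) = derivedBracket (mapCoeff 𝓑.Δ) i x y * z
      + (-1 : K) ^ ((i + 1) * j) • (y * derivedBracket (mapCoeff 𝓑.Δ) i x z) := by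
  refine derivedBracket_mapCoeff_poisson fun p q r => ?_
  have h := 𝓑.poisson _ _ _ _ (hx p) _ (hy q) _ (hz r)
  simpa only [derivedBracket_eq_of_even_iff (even_sub_mul_iff hk i p), neg_one_zpow_eq_ite,
    Int.even_mul, Int.even_add, even_sub_mul_iff hk] using h

theorem derivedBracket_laurentQ_mem_orderGE (hk : Even (k + 1)) (hx : x ∈ 𝓑.laurentGrading i)
    (hy : y ∈ 𝓑.laurentGrading j) (hxm : x ∈ orderGE K A m) (hyn : y ∈ orderGE K A n) :
    derivedBracket 𝓑.laurentQ i x y ∈ orderGE K A (1 + (m + n)) :=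
  𝓑.derivedBracket_laurentQ hk hx hy ▸
    single_mul_mem_orderGE (derivedBracket_mapCoeff_mem_orderGE 𝓑.Δ i hxm hyn)

theorem derivedBracket_laurentQ_coeff_add (hk : Even (k + 1)) (hx : x ∈ 𝓑.laurentGrading i)
    (hy : y ∈ 𝓑.laurentGrading j) (hxm : x ∈ orderGE K A m) (hyn : y ∈ orderGE K A n) :
    (derivedBracket 𝓑.laurentQ i x y).coeff (1 + (m + n))
      = derivedBracket 𝓑.Δ (i - m * (k + 1)) (x.coeff m) (y.coeff n) := by
  rw [𝓑.derivedBracket_laurentQ hk hx hy, HahnSeries.coeff_single_mul, add_sub_cancel_left,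
    one_mul, derivedBracket_mapCoeff_coeff_add 𝓑.Δ i hxm hyn,
    derivedBracket_eq_of_even_iff (even_sub_mul_iff hk i m)]

/-- The BV algebra `A((t))` with operator `tΔ - d`, where `t` has degree `k + 1`. -/
noncomputable def laurent (hk : Even (k + 1)) : HomogeneousBV K (LaurentSeries A) where
  G := 𝓑.laurentGrading
  one_mem p := by
    rw [HahnSeries.coeff_one]
    split_ifs with hp
    · simpa [hp] using 𝓑.one_mem
    · exact zero_mem _
  mul_mem _ _ _ hx _ hy := 𝓑.laurentGrading_mul_mem hx hy
  mul_gcomm _ _ _ hx _ hy := 𝓑.laurentGrading_mul_gcomm hk hx hy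
  Q := 𝓑.laurentQ
  Q_mem _ _ := 𝓑.laurentQ_mem
  Q_sq _ _ := 𝓑.laurentQ_sq
  Q_one := by
    ext p
    simp only [laurentQ_coeff, HahnSeries.coeff_one, apply_ite, map_zero, 𝓑.Δ_one, 𝓑.d_one]
    simp
  poisson i j l x hx y hy z hz := by
    rw [𝓑.derivedBracket_laurentQ hk hx (𝓑.laurentGrading_mul_mem hy hz),
      𝓑.derivedBracket_laurentQ hk hx hy, 𝓑.derivedBracket_laurentQ hk hx hz,
      𝓑.derivedBracket_Δ_poisson hk hx hy hz, mul_add, mul_smul_comm, ← mul_assoc, ← mul_assoc,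
      ← mul_assoc, single_one_mul_comm 1 y]

/-- The degeneration property, for homogeneous elements. -/
def DegenerationProperty : Prop :=
  ∀ i, ∀ a₀ ∈ 𝓑.F i, 𝓑.d a₀ = 0 → ∃ a : ℕ → A, a 0 = a₀ ∧
    (∀ n : ℕ, a n ∈ 𝓑.F (i - n * (k + 1))) ∧ ∀ n : ℕ, 𝓑.Δ (a n) = 𝓑.d (a (n + 1))

variable {𝓑}

theorem DegenerationProperty.exists_cocycle (hdeg : 𝓑.DegenerationProperty) {a : A}
    (ha : a ∈ 𝓑.F (i - p * (k + 1))) (hda : 𝓑.d a = 0) :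
    ∃ x ∈ 𝓑.laurentGrading i, x ∈ orderGE K A p ∧ x.coeff p = a ∧ 𝓑.laurentQ x = 0 := by
  obtain ⟨c, rfl, hc, hΔc⟩ := hdeg _ a ha hda
  let x : LaurentSeries A := HahnSeries.ofSuppBddBelow
    (fun q => if q < p then 0 else c (q - p).toNat)
    ⟨p, fun q hq => not_lt.1 fun h => hq (if_pos h)⟩
  have hx_lt : x ∈ orderGE K A p := fun q hq => if_pos hq
  have hx_add (n : ℕ) : x.coeff (p + n) = c n := by
    simp [x, HahnSeries.ofSuppBddBelow]
  have hx_self : x.coeff p = c 0 := by simpa using hx_add 0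
  refine ⟨x, fun q => ?_, hx_lt, hx_self, ?_⟩
  · obtain hq | ⟨n, rfl⟩ := (lt_or_ge q p).imp_right Int.le.dest
    · exact hx_lt q hq ▸ zero_mem _
    · rw [hx_add, add_mul, ← sub_sub]
      exact hc n
  · ext q
    rw [HahnSeries.coeff_zero]
    obtain hq | ⟨_ | n, rfl⟩ := (lt_or_ge q p).imp_right Int.le.dest
    · exact 𝓑.laurentQ_mem_orderGE hx_lt q hq
    · rw [Nat.cast_zero, add_zero, 𝓑.laurentQ_coeff_of_mem_orderGE hx_lt, hx_self, hda, neg_zero]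
    · rw [laurentQ_coeff, hx_add, Nat.cast_succ, ← add_assoc, add_sub_cancel_right, hx_add, hΔc,
        sub_self]

theorem DegenerationProperty.exists_laurentQ_eq (hdeg : 𝓑.DegenerationProperty)
    (hx : x ∈ 𝓑.laurentGrading i) (hQx : 𝓑.laurentQ x ∈ orderGE K A m) :
    ∃ y ∈ 𝓑.laurentGrading i, y ∈ orderGE K A m ∧ 𝓑.laurentQ y = 𝓑.laurentQ x := by
  suffices H : ∀ (n : ℕ), ∀ x ∈ 𝓑.laurentGrading i, x ∈ orderGE K A (m - n) →
      𝓑.laurentQ x ∈ orderGE K A m →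
      ∃ y ∈ 𝓑.laurentGrading i, y ∈ orderGE K A m ∧ 𝓑.laurentQ y = 𝓑.laurentQ x by
    obtain ⟨r, hr⟩ := exists_mem_orderGE K x
    exact H (m - r).toNat x hx (fun p hp => hr p (by omega)) hQx
  intro n
  induction n with
  | zero => exact fun x hx hxm _ => ⟨x, hx, by simpa using hxm, rfl⟩
  | succ n ih =>
    intro x hx hxm hQx
    have hd : 𝓑.d (x.coeff (m - (n + 1 : ℕ))) = 0 := by
      rw [← neg_eq_zero, ← 𝓑.laurentQ_coeff_of_mem_orderGE hxm, hQx _ (by omega)]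
    obtain ⟨c, hc, hcm, hcx, hQc⟩ := hdeg.exists_cocycle (hx _) hd
    have hsub : x - c ∈ orderGE K A (m - n) := by
      intro p hp
      obtain rfl | hp := (show p ≤ m - (n + 1 : ℕ) by grind).eq_or_lt
      · rw [HahnSeries.coeff_sub, hcx, sub_self]
      · exact sub_mem hxm hcm p hp
    have hQ : 𝓑.laurentQ (x - c) = 𝓑.laurentQ x := by rw [map_sub, hQc, sub_zero]
    exact hQ ▸ ih (x - c) (sub_mem hx hc) hsub (hQ ▸ hQx)

/-- The DGLA of a dBV algebra is the quotient of the polar lattice `t⁻¹ A[[t]]` of `A((t))` by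
`A[[t]]`: the leading coefficient of a bracket of two simple poles is the bracket of the
coefficients. -/
theorem DegenerationProperty.homotopyAbelian {K A : Type u} [Field K] [CharZero K] [Ring A]
    [Algebra K A] {𝓑 : HomogeneousDBV K k A} (hdeg : 𝓑.DegenerationProperty) (hk : Even (k + 1))
    {g : DGLAStruct K A} (hgrading : ∀ i, 𝓑.F (i + k) ≤ g.grading i)
    (hd : ∀ i, ∀ a ∈ 𝓑.F i, g.d a = -𝓑.d a)
    (hbracket : ∀ i j, ∀ a ∈ 𝓑.F i, ∀ b ∈ 𝓑.F j, g.bracket a b = derivedBracket 𝓑.Δ i a b)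
    (hclosed : ∀ i, ∀ a ∈ g.grading i, g.d a = 0 → a ∈ 𝓑.F (i + k)) :
    DGLA.HomotopyAbelian (DGLA.mk (K := K) A g) := by
  have hpole : (1 : ℤ) + (-1 + -1) = -1 := by norm_num
  have hshift (i : ℤ) : i - 1 - (-1) * (k + 1) = i + k := by ring
  refine (𝓑.laurent hk).homotopyAbelian_of_lattice (orderGE K A (-1))
    (fun _ _ _ => 𝓑.laurentQ_mem_orderGE)
    (fun _ _ x hx y hy hxL hyL =>
      hpole ▸ 𝓑.derivedBracket_laurentQ_mem_orderGE hk hx hy hxL hyL)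
    (fun _ _ hx hQx => hdeg.exists_laurentQ_eq hx hQx) (HahnSeries.coeff.linearMap (-1))
    (fun i x hx _ => hgrading i (hshift i ▸ hx (-1)))
    (fun _ x hx hxL => (𝓑.laurentQ_coeff_of_mem_orderGE hxL).trans (hd _ _ (hx (-1))).symm)
    (fun _ _ x hx y hy hxL hyL => (𝓑.derivedBracket_laurentQ_coeff_add hk hx hy hxL hyL).trans
      (hbracket _ _ _ (hx (-1)) _ (hy (-1))).symm)
    fun i a ha hda => ?_
  have haF := hclosed i a ha hda
  have hda' : 𝓑.d a = 0 := by rw [← neg_eq_zero, ← hd _ _ haF, hda]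
  obtain ⟨x, hx, hxL, hxa, hQx⟩ := hdeg.exists_cocycle (hshift i ▸ haF) hda'
  exact ⟨x, hx, hxL, hQx, hxa⟩

end HomogeneousDBV

namespace DBV

variable {K : Type*} [Field K] {k : ℤ} {A : Type*} [Ring A] [Algebra K A] (B : DBV K k A)

/-- The anticommutator `dΔ + Δd`. -/
def anticommutator : A →ₗ[K] A :=
  B.d ∘ₗ B.Δ + B.Δ ∘ₗ B.d

theorem anticommutator_apply (a : A) : B.anticommutator a = B.d (B.Δ a) + B.Δ (B.d a) :=
  rfl

theorem anticommutator_d (a : A) : B.anticommutator (B.d a) = B.d (B.anticommutator a) := by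
  simp [anticommutator_apply, B.d_sq]

theorem anticommutator_Δ (a : A) : B.anticommutator (B.Δ a) = B.Δ (B.anticommutator a) := by
  simp [anticommutator_apply, B.Δ_sq]

theorem anticommutator_mul {i : ℤ} {a b : A} (hk : Odd k) (ha : a ∈ B.grading i)
    (h : B.d (derivedBracket B.Δ i a b) = derivedBracket B.Δ (i + 1) (B.d a) b
      + (-1 : K) ^ (i - k) • derivedBracket B.Δ i a (B.d b)) :
    B.anticommutator (a * b) = B.anticommutator a * b + a * B.anticommutator b := by
  have hk' := Int.not_even_iff_odd.2 hk
  simp only [anticommutator_apply, derivedBracket_apply, B.d_leibniz i a ha, map_add, map_sub,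
    map_smul, B.d_leibniz _ _ (B.Δ_degree i a ha), add_mul, mul_add, neg_one_zpow_eq_ite,
    Int.even_sub, Int.even_add] at h ⊢
  by_cases hi : Even i <;>
    simp only [hi, hk', Int.not_even_one, iff_false, not_true_eq_false, if_true, if_false,
      one_smul, neg_smul] at h ⊢
  · linear_combination (norm := module) h
  · linear_combination (norm := module) -h

theorem derivedBracket_poisson (hk : Odd k) {i j l : ℤ} {a b c : A} (ha : a ∈ B.grading i)
    (hb : b ∈ B.grading j) (hc : c ∈ B.grading l) :
    derivedBracket B.Δ i a (b * c) = derivedBracket B.Δ i a b * c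
      + (-1 : K) ^ ((i + 1) * j) • (b * derivedBracket B.Δ i a c) := by
  have hk' := Int.not_even_iff_odd.2 hk
  have hΔ {n x} := B.Δ_degree n x
  have h := B.seven_term i j l a ha b hb c hc
  have hmul {m n x y} (hx : x ∈ B.grading m) (hy : y ∈ B.grading n) := B.mul_mem m n x hx y hy
  have hcomm {m n x y} (hx : x ∈ B.grading m) (hy : y ∈ B.grading n) := B.mul_gcomm m n x hx y hy
  have hba (z : A) : b * (a * z) = (-1 : K) ^ (j * i) • (a * b * z) := by
    rw [← mul_assoc, hcomm hb ha, smul_mul_assoc]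
  have hbΔa (z : A) : b * (B.Δ a * z) = (-1 : K) ^ (j * (i - k)) • (B.Δ a * b * z) := by
    rw [← mul_assoc, hcomm hb (hΔ ha), smul_mul_assoc]
  rw [hcomm (hΔ hb) ha, mul_assoc (B.Δ c), hcomm (hΔ hc) (hmul ha hb),
    hcomm (hΔ (hmul hb hc)) ha, hcomm (hΔ (hmul ha hc)) hb] at h
  simp only [derivedBracket_apply, mul_sub, sub_mul, mul_smul_comm, smul_mul_assoc, hba, hbΔa,
    ← mul_assoc a b c, ← mul_assoc (B.Δ a) b c, neg_one_zpow_eq_ite, Int.even_mul, Int.even_sub,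
    Int.even_add] at h ⊢
  by_cases hi : Even i <;> by_cases hj : Even j <;> by_cases hl : Even l <;>
    simp only [hi, hj, hl, hk', Int.not_even_one, or_true, or_false, iff_true, iff_false,
      not_true_eq_false, if_true, if_false, one_smul, neg_smul] at h ⊢ <;>
    first
    | linear_combination (norm := module) h
    | linear_combination (norm := module) -h

/-- The elements of `B` killed by `dΔ + Δd`, where `d` and `Δ` anticommute. The hypothesis, that
`d` is a derivation of the bracket derived from `Δ`, makes `dΔ + Δd` a derivation of the product. -/
def kerAnticommutator (hk : Odd k)
    (hleib : ∀ i, ∀ a ∈ B.grading i, ∀ b, B.d (derivedBracket B.Δ i a b)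
      = derivedBracket B.Δ (i + 1) (B.d a) b
        + (-1 : K) ^ (i - k) • derivedBracket B.Δ i a (B.d b)) :
    HomogeneousDBV K k A where
  F i := B.grading i ⊓ LinearMap.ker B.anticommutator
  one_mem := ⟨B.one_mem, by
    have hd : B.d 1 = 0 := by simpa using B.d_leibniz 0 1 B.one_mem 1
    simp [anticommutator_apply, B.Δ_one, hd]⟩
  mul_mem i j a ha b hb := ⟨B.mul_mem i j a ha.1 b hb.1, LinearMap.mem_ker.2 <| by
    rw [B.anticommutator_mul hk ha.1 (hleib i a ha.1 b), LinearMap.mem_ker.1 ha.2,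
      LinearMap.mem_ker.1 hb.2, zero_mul, mul_zero, add_zero]⟩
  mul_gcomm i j a ha b hb := B.mul_gcomm i j a ha.1 b hb.1
  d := B.d
  d_mem i a ha := ⟨B.d_degree i a ha.1, LinearMap.mem_ker.2 <| by
    rw [B.anticommutator_d, LinearMap.mem_ker.1 ha.2, map_zero]⟩
  d_sq _ a _ := B.d_sq a
  d_mul i _ a ha b _ := B.d_leibniz i a ha.1 b
  Δ := B.Δ
  Δ_mem i a ha := ⟨B.Δ_degree i a ha.1, LinearMap.mem_ker.2 <| by
    rw [B.anticommutator_Δ, LinearMap.mem_ker.1 ha.2, map_zero]⟩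
  Δ_sq _ a _ := B.Δ_sq a
  Δ_one := B.Δ_one
  d_Δ_add_Δ_d _ _ ha := ha.2
  poisson _ _ _ _ ha _ hb _ hc := B.derivedBracket_poisson hk ha.1 hb.1 hc.1

variable {B} {hk : Odd k}
  {hleib : ∀ i, ∀ a ∈ B.grading i, ∀ b, B.d (derivedBracket B.Δ i a b)
    = derivedBracket B.Δ (i + 1) (B.d a) b + (-1 : K) ^ (i - k) • derivedBracket B.Δ i a (B.d b)}

theorem DegenerationProperty.anticommutator_eq_zero (hdeg : B.DegenerationProperty) {i : ℤ} {a : A}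
    (ha : a ∈ B.grading i) (hda : B.d a = 0) : B.anticommutator a = 0 := by
  obtain ⟨c, rfl, -, hc⟩ := hdeg i a ha hda
  rw [anticommutator_apply, hc, B.d_sq, hda, map_zero, add_zero]

theorem DegenerationProperty.kerAnticommutator (hdeg : B.DegenerationProperty) :
    (B.kerAnticommutator hk hleib).DegenerationProperty := by
  rintro i a ⟨ha, -⟩ hda
  obtain ⟨c, hc₀, hc, hΔc⟩ := hdeg i a ha hda
  refine ⟨c, hc₀, fun n => ⟨hc n, ?_⟩, hΔc⟩
  have hΔd : B.Δ (B.d (c n)) = 0 := by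
    cases n with
    | zero => rw [hc₀, show B.d a = 0 from hda, map_zero]
    | succ n => rw [← hΔc, B.Δ_sq]
  exact LinearMap.mem_ker.2 (by rw [anticommutator_apply, hΔc, B.d_sq, hΔd, add_zero])

end DBV

/-- Let `(A, d, Δ)` be a differential Batalin–Vilkovisky algebra of
odd degree `k` over a field `K` of characteristic `0` which has the degeneration
property.  Then the associated DGLA `g = A[k]` — with grading `g^i = A^{i+k}`,
differential `-d`, and bracket `[a,b] = (-1)^{deg a} (Δ(ab) - Δ(a)b) - aΔ(b)` —
is homotopy abelian. -/
theorem dbv_degeneration_homotopy_abelian {K : Type u} [Field K] [CharZero K]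
    {A : Type u} [Ring A] [Algebra K A] {k : ℤ} (hk : Odd k)
    (B : DBV K k A) (hdeg : B.DegenerationProperty)
    (g : DGLAStruct K A)
    (hgrading : ∀ i : ℤ, g.grading i = B.grading (i + k))
    (hd : ∀ a : A, g.d a = -B.d a)
    (hbracket : ∀ i : ℤ, ∀ a ∈ B.grading i, ∀ b : A,
      g.bracket a b = ((-1 : K) ^ i) • (B.Δ (a * b) - B.Δ a * b) - a * B.Δ b) :
    DGLA.HomotopyAbelian (DGLA.mk (K := K) A g) := by
  have hleib (i) (a) (ha : a ∈ B.grading i) (b) : B.d (derivedBracket B.Δ i a b)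
      = derivedBracket B.Δ (i + 1) (B.d a) b
        + (-1 : K) ^ (i - k) • derivedBracket B.Δ i a (B.d b) := by
    have h := g.bracket_leibniz (i - k) a (by rwa [hgrading, sub_add_cancel]) b
    rw [hd, hd, hd, hbracket i a ha, map_neg, LinearMap.neg_apply, map_neg, hbracket i a ha,
      hbracket _ _ (B.d_degree i a ha), smul_neg, ← neg_add, neg_inj] at h
    exact h
  have hdeg' : (B.kerAnticommutator hk hleib).DegenerationProperty := hdeg.kerAnticommutator
  refine hdeg'.homotopyAbelian hk.add_one (fun i => ?_)
    (fun _ a _ => hd a) (fun i _ a ha b _ => hbracket i a ha.1 b) fun i a ha hda => ?_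
  · exact (hgrading i).symm ▸ inf_le_left
  · rw [hgrading] at ha
    rw [hd, neg_eq_zero] at hda
    exact ⟨ha, hdeg.anticommutator_eq_zero ha hda⟩
end

section
/- Let (A, d, Δ) be a differential Batalin–Vilkovisky algebra of odd degree k over a field K of characteristic 0, let t be a central formal variable of (even) degree k+1, and equip A((t)) (formal Laurent series with coefficients in A) with the differential d − tΔ. Then the degree −1 linear map i : g → Hom^*_K(A((t)), A((t))), i_a(b) = (1/t) a b, from the associated DGLA g = A[k], is a Cartan homotopy: i_{[a,b]} = [i_a, d i_b] and [i_a, i_b] = 0 for all a, b ∈ g, where d denotes the differential of the Hom DGLA induced by d − tΔ. -/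
universe u v w

/-!
Since `t` has even degree, `[t^m f, t^n g] = t^(m+n) [f, g]` for endomorphisms `f`, `g` of `A`, and
both `d - tΔ` and `i_a = t⁻¹ L_a` are combinations of such operators, where `L_a` is left
multiplication by `a`. On `A`, graded commutativity gives `[L_a, L_b] = 0`, the Leibniz rule gives
`[d, L_b] = L_{db}`, and the seven-term relation, which says that `Δ` is a differential operator of
order two, gives `[L_a, [Δ, L_b]] = -L_{[a,b]}`. Therefore
`[i_a, [d - tΔ, i_b]] = t⁻² [L_a, L_{db}] - t⁻¹ [L_a, [Δ, L_b]] = i_{[a,b]}`.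
-/

theorem neg_one_zpow_congr {K : Type*} [DivisionRing K] {m n : ℤ} (h : m ≡ n [ZMOD 2]) :
    (-1 : K) ^ m = (-1 : K) ^ n := by
  obtain ⟨c, hc⟩ := h.dvd
  rw [eq_add_of_sub_eq' hc, zpow_add₀ (by simp), (even_two_mul c).neg_one_zpow, mul_one]

theorem sub_modEq_add_one_of_odd {k : ℤ} (hk : Odd k) (n : ℤ) : n - k ≡ n + 1 [ZMOD 2] := by
  obtain ⟨r, rfl⟩ := hk
  exact Int.modEq_iff_dvd.2 ⟨r + 1, by ring⟩

theorem neg_modEq_one_of_odd {k : ℤ} (hk : Odd k) : -k ≡ 1 [ZMOD 2] := by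
  simpa only [zero_sub, zero_add] using sub_modEq_add_one_of_odd hk 0

theorem sub_sub_one_modEq_of_odd {k : ℤ} (hk : Odd k) (n : ℤ) : n - k - 1 ≡ n [ZMOD 2] := by
  simpa only [add_sub_cancel_right] using (sub_modEq_add_one_of_odd hk n).sub_right 1

theorem linearMap_ext_of_iSup_eq_top {ι R M N : Type*} [Semiring R] [AddCommMonoid M]
    [AddCommMonoid N] [Module R M] [Module R N] {p : ι → Submodule R M} (hp : ⨆ i, p i = ⊤)
    {f g : M →ₗ[R] N} (h : ∀ i, ∀ x ∈ p i, f x = g x) : f = g := by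
  have : ⨆ i, p i ≤ LinearMap.eqLocus f g := iSup_le h
  exact LinearMap.ext fun x => this (hp ▸ Submodule.mem_top)

section GradedCommutator

variable (K : Type*) {R : Type*} [Field K] [Ring R] [Algebra K R]

/-- The graded commutator `[x, y] = x y - (-1) ^ (m n) y x`, where `m` and `n` are the degrees
of `x` and `y`. The degrees are explicit arguments: `R` carries no grading. -/
def gradedCommutator (m n : ℤ) (x y : R) : R :=
  x * y - (-1 : K) ^ (m * n) • (y * x)

variable {K}

theorem gradedCommutator_congr {m m' n n' : ℤ} (hm : m ≡ m' [ZMOD 2]) (hn : n ≡ n' [ZMOD 2])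
    (x y : R) : gradedCommutator K m n x y = gradedCommutator K m' n' x y := by
  rw [gradedCommutator, gradedCommutator, neg_one_zpow_congr (hm.mul hn)]

theorem gradedCommutator_sub_left (m n : ℤ) (x x' y : R) :
    gradedCommutator K m n (x - x') y =
      gradedCommutator K m n x y - gradedCommutator K m n x' y := by
  simp only [gradedCommutator, sub_mul, mul_sub, smul_sub]
  abel

theorem gradedCommutator_sub_right (m n : ℤ) (x y y' : R) :
    gradedCommutator K m n x (y - y') =
      gradedCommutator K m n x y - gradedCommutator K m n x y' := by
  simp only [gradedCommutator, sub_mul, mul_sub, smul_sub]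
  abel

end GradedCommutator

section LaurentMonomial

variable {K A : Type*} [Field K] [Ring A] [Algebra K A]

/-- The operator `t ^ n f` on `A((t))` for an endomorphism `f` of `A`, linear in `f`. Both
`d - tΔ` and `i_a` are combinations of such operators. -/
def laurentMonomial (n : ℤ) : Module.End K A →ₗ[K] Module.End K (Laurent K A) where
  toFun f := LinearMap.restrict
    (LinearMap.pi fun p : ℤ => f ∘ₗ LinearMap.proj (p - n))
    (p := laurentSupport K A) (q := laurentSupport K A)
    (fun x ⟨N, hN⟩ => ⟨N + n, fun p hp => by
      simp [hN (p - n) (by lia)]⟩)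
  map_add' _ _ := rfl
  map_smul' _ _ := rfl

theorem laurentMonomial_apply (n : ℤ) (f : Module.End K A) (x : Laurent K A) (p : ℤ) :
    (laurentMonomial n f x : ℤ → A) p = f ((x : ℤ → A) (p - n)) :=
  rfl

theorem laurentMonomial_mul (m n : ℤ) (f g : Module.End K A) :
    laurentMonomial m f * laurentMonomial n g = laurentMonomial (m + n) (f * g) := by
  ext x p
  simp only [Module.End.mul_apply, laurentMonomial_apply, sub_sub]

theorem gradedCommutator_laurentMonomial (i j m n : ℤ) (f g : Module.End K A) :
    gradedCommutator K i j (laurentMonomial m f) (laurentMonomial n g) =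
      laurentMonomial (m + n) (gradedCommutator K i j f g) := by
  simp only [gradedCommutator, laurentMonomial_mul, map_sub, map_smul, add_comm n m]

theorem laurentContr_eq_laurentMonomial (a : A) :
    laurentContr (K := K) a = laurentMonomial (-1) (LinearMap.mulLeft K a) := by
  ext x p
  rw [laurentMonomial_apply, sub_neg_eq_add]
  rfl

theorem laurentD_eq_laurentMonomial {k : ℤ} (B : DBV K k A) :
    laurentD B = laurentMonomial 0 B.d - laurentMonomial 1 B.Δ := by
  ext x p
  simp only [LinearMap.sub_apply, Submodule.coe_sub, Pi.sub_apply, laurentMonomial_apply,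
    sub_zero]
  rfl

end LaurentMonomial

namespace DBV

variable {K A : Type*} [Field K] [Ring A] [Algebra K A] {k α β : ℤ} {a b : A}

/-- The bracket `[a, b]` of the DGLA `A[k]` associated with a dBV algebra. The degree `α` of `a`
in `A`, which determines the sign, is an explicit argument. -/
def bracket (B : DBV K k A) (α : ℤ) (a b : A) : A :=
  (-1 : K) ^ α • (B.Δ (a * b) - B.Δ a * b) - a * B.Δ b

theorem gradedCommutator_mulLeft (B : DBV K k A) (ha : a ∈ B.grading α) (hb : b ∈ B.grading β) :
    gradedCommutator K α β (LinearMap.mulLeft K a) (LinearMap.mulLeft K b) = 0 := by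
  ext c
  simp only [gradedCommutator, LinearMap.sub_apply, LinearMap.smul_apply, Module.End.mul_apply,
    LinearMap.mulLeft_apply, LinearMap.zero_apply, ← mul_assoc, B.mul_gcomm α β a ha b hb,
    smul_mul_assoc, sub_self]

theorem gradedCommutator_d_mulLeft (B : DBV K k A) (hb : b ∈ B.grading β) :
    gradedCommutator K 1 β B.d (LinearMap.mulLeft K b) = LinearMap.mulLeft K (B.d b) := by
  ext c
  simp only [gradedCommutator, LinearMap.sub_apply, LinearMap.smul_apply, Module.End.mul_apply,
    LinearMap.mulLeft_apply, one_mul, B.d_leibniz β b hb, add_sub_cancel_right]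

theorem smul_Δ_mul (hk : Odd k) (B : DBV K k A) (ha : a ∈ B.grading α) (hb : b ∈ B.grading β)
    {m n : ℤ} (hmn : m + (α + 1) * β ≡ n [ZMOD 2]) :
    (-1 : K) ^ m • (B.Δ a * b) = (-1 : K) ^ n • (b * B.Δ a) := by
  have hexp : m + (α - k) * β ≡ n [ZMOD 2] :=
    (((sub_modEq_add_one_of_odd hk α).mul_right β).add_left m).trans hmn
  rw [B.mul_gcomm _ _ _ (B.Δ_degree _ _ ha) _ hb, smul_smul, ← zpow_add₀ (by simp),
    neg_one_zpow_congr hexp]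

/-- The seven-term relation rearranged so that no sign depends on the degree of `c`. -/
theorem Δ_mul_mul (hk : Odd k) (B : DBV K k A) {l : ℤ} {c : A} (ha : a ∈ B.grading α)
    (hb : b ∈ B.grading β) (hc : c ∈ B.grading l) :
    B.Δ (a * b * c) + B.Δ a * b * c + (-1 : K) ^ α • (a * B.Δ b * c)
        + (-1 : K) ^ (α + β) • (a * b * B.Δ c) =
      B.Δ (a * b) * c + (-1 : K) ^ α • (a * B.Δ (b * c))
        + (-1 : K) ^ ((α + 1) * β) • (b * B.Δ (a * c)) := by
  have hb_a : (-1 : K) ^ (α * β) • (B.Δ b * a) = (-1 : K) ^ α • (a * B.Δ b) :=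
    smul_Δ_mul hk B hb ha (Int.modEq_iff_dvd.2 ⟨-(α * β), by ring⟩)
  have hc_ab : (-1 : K) ^ (l * (α + β)) • (B.Δ c * (a * b)) =
      (-1 : K) ^ (α + β) • (a * b * B.Δ c) :=
    smul_Δ_mul hk B hc (B.mul_mem _ _ _ ha _ hb)
      (Int.modEq_iff_dvd.2 ⟨-(l * (α + β)), by ring⟩)
  have hbc_a : (-1 : K) ^ (α * (β + l)) • (B.Δ (b * c) * a) =
      (-1 : K) ^ α • (a * B.Δ (b * c)) :=
    smul_Δ_mul hk B (B.mul_mem _ _ _ hb _ hc) ha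
      (Int.modEq_iff_dvd.2 ⟨-(α * (β + l)), by ring⟩)
  have hac_b : (-1 : K) ^ (β * l) • (B.Δ (a * c) * b) =
      (-1 : K) ^ ((α + 1) * β) • (b * B.Δ (a * c)) :=
    smul_Δ_mul hk B (B.mul_mem _ _ _ ha _ hc) hb (Int.modEq_iff_dvd.2 ⟨-(β * l), by ring⟩)
  have h := B.seven_term α β l a ha b hb c hc
  rwa [← smul_mul_assoc, hb_a, smul_mul_assoc, mul_assoc (B.Δ c), hc_ab, hbc_a, hac_b] at h

theorem bracket_mul (hk : Odd k) (B : DBV K k A) {l : ℤ} {c : A} (ha : a ∈ B.grading α)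
    (hb : b ∈ B.grading β) (hc : c ∈ B.grading l) :
    B.bracket α a b * c =
      (-1 : K) ^ α • B.Δ (a * b * c) + (-1 : K) ^ β • (a * b * B.Δ c) - a * B.Δ (b * c)
        - ((-1 : K) ^ α * (-1 : K) ^ ((α + 1) * β)) • (b * B.Δ (a * c)) := by
  have hα : (-1 : K) ^ α * (-1 : K) ^ α = 1 := by rw [← mul_zpow, neg_mul_neg, one_mul, one_zpow]
  have hΔ := Δ_mul_mul hk B ha hb hc
  rw [zpow_add₀ (by simp)] at hΔ
  simp only [bracket, sub_mul, smul_mul_assoc]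
  linear_combination (norm := (match_scalars <;> grind)) (-(-1 : K) ^ α) • hΔ

theorem gradedCommutator_mulLeft_gradedCommutator_Δ (hk : Odd k) (B : DBV K k A)
    (ha : a ∈ B.grading α) (hb : b ∈ B.grading β) :
    gradedCommutator K α (β - k) (LinearMap.mulLeft K a)
        (gradedCommutator K (-k) β B.Δ (LinearMap.mulLeft K b)) =
      -LinearMap.mulLeft K (B.bracket α a b) := by
  rw [gradedCommutator_congr (Int.ModEq.refl α) (sub_modEq_add_one_of_odd hk β),
    gradedCommutator_congr (neg_modEq_one_of_odd hk) (Int.ModEq.refl β)]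
  refine linearMap_ext_of_iSup_eq_top B.isInternal.submodule_iSup_eq_top fun l c hc => ?_
  have hba : (-1 : K) ^ (α * (β + 1)) • B.Δ (b * a * c) = (-1 : K) ^ α • B.Δ (a * b * c) := by
    rw [B.mul_gcomm _ _ _ hb _ ha, smul_mul_assoc, map_smul, smul_smul, ← zpow_add₀ (by simp),
      neg_one_zpow_congr (Int.modEq_iff_dvd.2 ⟨-(α * β), by ring⟩)]
  have hsigns : (-1 : K) ^ (α * (β + 1)) * (-1 : K) ^ β =
      (-1 : K) ^ α * (-1 : K) ^ ((α + 1) * β) := by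
    rw [← zpow_add₀ (by simp), ← zpow_add₀ (by simp)]
    ring_nf
  simp only [gradedCommutator, LinearMap.sub_apply, LinearMap.smul_apply, one_mul,
    LinearMap.neg_apply, Module.End.mul_apply, LinearMap.mulLeft_apply, bracket_mul hk B ha hb hc,
    smul_sub, mul_sub, mul_smul_comm, ← mul_assoc, smul_smul, hba, hsigns]
  abel

end DBV

section CartanHomotopy

variable {K A : Type*} [Field K] [Ring A] [Algebra K A] {k α β : ℤ} {a b : A}

theorem gradedCommutator_laurentContr (B : DBV K k A) (ha : a ∈ B.grading α)
    (hb : b ∈ B.grading β) :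
    gradedCommutator K α β (laurentContr (K := K) a) (laurentContr b) = 0 := by
  rw [laurentContr_eq_laurentMonomial, laurentContr_eq_laurentMonomial,
    gradedCommutator_laurentMonomial, B.gradedCommutator_mulLeft ha hb, map_zero]

theorem gradedCommutator_laurentD_laurentContr (hk : Odd k) (B : DBV K k A)
    (hb : b ∈ B.grading β) :
    gradedCommutator K 1 (β - k - 1) (laurentD B) (laurentContr b) =
      laurentContr (B.d b) -
        laurentMonomial 0 (gradedCommutator K (-k) β B.Δ (LinearMap.mulLeft K b)) := by
  rw [gradedCommutator_congr (Int.ModEq.refl 1) (sub_sub_one_modEq_of_odd hk β),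
    gradedCommutator_congr (neg_modEq_one_of_odd hk) (Int.ModEq.refl β),
    laurentD_eq_laurentMonomial, laurentContr_eq_laurentMonomial, laurentContr_eq_laurentMonomial,
    gradedCommutator_sub_left, gradedCommutator_laurentMonomial, gradedCommutator_laurentMonomial,
    B.gradedCommutator_d_mulLeft hb, zero_add, add_neg_cancel]

theorem laurentContr_bracket (hk : Odd k) (B : DBV K k A) (ha : a ∈ B.grading α)
    (hb : b ∈ B.grading β) :
    laurentContr (K := K) (B.bracket α a b) =
      gradedCommutator K (α - k - 1) (β - k) (laurentContr (K := K) a)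
        (gradedCommutator K 1 (β - k - 1) (laurentD B) (laurentContr b)) := by
  have hd : gradedCommutator K α (β - k) (laurentContr (K := K) a) (laurentContr (B.d b)) = 0 := by
    rw [gradedCommutator_congr (Int.ModEq.refl α) (sub_modEq_add_one_of_odd hk β)]
    exact gradedCommutator_laurentContr B ha (B.d_degree β b hb)
  rw [gradedCommutator_congr (sub_sub_one_modEq_of_odd hk α) (Int.ModEq.refl (β - k)),
    gradedCommutator_laurentD_laurentContr hk B hb, gradedCommutator_sub_right, hd,
    laurentContr_eq_laurentMonomial, laurentContr_eq_laurentMonomial,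
    gradedCommutator_laurentMonomial, B.gradedCommutator_mulLeft_gradedCommutator_Δ hk ha hb,
    map_neg, add_zero, sub_neg_eq_add, zero_add]

end CartanHomotopy

theorem dbv_contraction_is_cartan_homotopy_general {K : Type u} [Field K]
    {A : Type v} [Ring A] [Algebra K A] {k : ℤ} (hk : Odd k) (B : DBV K k A) :
    (∀ (α β : ℤ) (a b : A), a ∈ B.grading α → b ∈ B.grading β →
      laurentContr (K := K) (B.bracket α a b) =
        gradedCommutator K (α - k - 1) (β - k) (laurentContr (K := K) a)
          (gradedCommutator K 1 (β - k - 1) (laurentD B) (laurentContr b))) ∧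
    (∀ (α β : ℤ) (a b : A), a ∈ B.grading α → b ∈ B.grading β →
      gradedCommutator K (α - k - 1) (β - k - 1) (laurentContr (K := K) a) (laurentContr b) =
        0) := by
  refine ⟨fun α β a b ha hb => laurentContr_bracket hk B ha hb, fun α β a b ha hb => ?_⟩
  rw [gradedCommutator_congr (sub_sub_one_modEq_of_odd hk α) (sub_sub_one_modEq_of_odd hk β)]
  exact gradedCommutator_laurentContr B ha hb

/-- Let `(A, d, Δ)` be a differential Batalin–Vilkovisky algebra of
odd degree `k` over a field `K` of characteristic `0`, and equip `A((t))` (`t` central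
of even degree `k+1`) with the differential `d - tΔ`.  Then the degree `-1` linear map
`i : g = A[k] → Hom*(A((t)), A((t)))`, `i_a(b) = (1/t) a b`, is a Cartan homotopy:
`i_{[a,b]} = [i_a, d i_b]` and `[i_a, i_b] = 0` for all `a, b ∈ g`, where `d` denotes
the differential of the Hom DGLA induced by `d - tΔ` and the brackets are graded
commutators (for `a ∈ A^α`, the operator `i_a` has degree `α - k - 1` and
`d i_b = (d-tΔ) ∘ i_b - (-1)^{β-k-1} i_b ∘ (d-tΔ)` has degree `β - k`). -/
theorem dbv_contraction_is_cartan_homotopy {K : Type u} [Field K] [CharZero K]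
    {A : Type u} [Ring A] [Algebra K A] {k : ℤ} (hk : Odd k) (B : DBV K k A) :
    (∀ (α β : ℤ) (a b : A), a ∈ B.grading α → b ∈ B.grading β →
      laurentContr (K := K) (((-1 : K) ^ α) • (B.Δ (a * b) - B.Δ a * b) - a * B.Δ b) =
        laurentContr (K := K) a ∘ₗ
            (laurentD B ∘ₗ laurentContr (K := K) b -
              ((-1 : K) ^ (β - k - 1)) • (laurentContr (K := K) b ∘ₗ laurentD B)) -
          ((-1 : K) ^ ((α - k - 1) * (β - k))) •
            ((laurentD B ∘ₗ laurentContr (K := K) b -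
              ((-1 : K) ^ (β - k - 1)) • (laurentContr (K := K) b ∘ₗ laurentD B)) ∘ₗ
                laurentContr (K := K) a)) ∧
    (∀ (α β : ℤ) (a b : A), a ∈ B.grading α → b ∈ B.grading β →
      laurentContr (K := K) a ∘ₗ laurentContr (K := K) b =
        ((-1 : K) ^ ((α - k - 1) * (β - k - 1))) •
          (laurentContr (K := K) b ∘ₗ laurentContr (K := K) a)) := by
  simpa only [gradedCommutator, DBV.bracket, one_mul, sub_eq_zero, Module.End.mul_eq_comp] using
    dbv_contraction_is_cartan_homotopy_general hk B
end
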